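/- Let 0 < α < 1 and 0 < p < 1 be fixed. Then there exist a constant C > 0 and, for each n ≥ 2, an integer k_n with |k_n − (log_{1/√(pq)} n − (|ln(p/q)| / (2 ln^{3/2}(1/√(pq)))) · Φ^{-1}(α) · √(ln n))| ≤ C, such that the probability that F_n(α) ∈ {k_n, k_n + 1} tends to 1 as n → ∞. -/

import Mathlib

/-!
Partial fillup in tries (Janson–Szpankowski), Theorem 1 (two-point concentration
of the α-fillup level `F_n(α)`).

Model: an outcome `ω : ℕ → ℕ → Bool` encodes infinitely many strings, where
`ω i j` is the `j`-th bit of the `i`-th string; the measure `ν` makes all bits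
i.i.d. with `P(bit = 1) = p`.  The trie on `n` strings uses strings `0,…,n-1`.
-/

open MeasureTheory ProbabilityTheory Real Filter

/-- The number of strings among the first `n` (encoded in `ω`) whose first `k` bits
form the word `r ∈ {0,1}^k`. -/
def prefCount (ω : ℕ → ℕ → Bool) (n k : ℕ) (r : Fin k → Bool) : ℕ :=
  ((Finset.range n).filter fun i => ∀ j : Fin k, ω i j = r j).card

/-- `X_k`: the number of words `r ∈ {0,1}^k` that are prefixes of at least two of the
first `n` strings. -/
def fillCount (ω : ℕ → ℕ → Bool) (n k : ℕ) : ℕ :=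
  (Finset.univ.filter fun r : Fin k → Bool => 2 ≤ prefCount ω n k r).card

/-- `X̄_k = X_k / 2^k`, the proportion of filled words at level `k`. -/
noncomputable def fracFilled (ω : ℕ → ℕ → Bool) (n k : ℕ) : ℝ :=
  (fillCount ω n k : ℝ) / 2 ^ k

/-- The α-fillup level `F_n(α) = max {k : X̄_k ≥ α}`. -/
noncomputable def fillupLevel (α : ℝ) (ω : ℕ → ℕ → Bool) (n : ℕ) : ℕ :=
  sSup {k | α ≤ fracFilled ω n k}

/-- `ν` is a probability measure on `ℕ → ℕ → Bool` under which all the bits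
`ω i j` are i.i.d. with `P(bit = 1) = p` (characterized by cylinder probabilities). -/
def IIDBits (p : ℝ) (ν : Measure (ℕ → ℕ → Bool)) : Prop :=
  IsProbabilityMeasure ν ∧
    ∀ (S : Finset (ℕ × ℕ)) (b : ℕ × ℕ → Bool),
      ν {ω | ∀ s ∈ S, ω s.1 s.2 = b s} =
        ∏ s ∈ S, ENNReal.ofReal (if b s then p else 1 - p)


/-!
A word of length `k` whose bits have sign sum `s` (ones minus zeros) has probability
`exp (-k L ± β s)`, with `L = log (1 / √(p q))` and `β = |log (p / q)| / 2`. It is filled with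
probability `fillCurve n u`, where `u = log n - k L ± β s` is the logarithm of the expected number
of strings starting with it, and `fillCurve n` is a smoothed step from `0` to `1` at the origin.
Averaging over all words, the mean proportion of filled words is `𝔼 fillCurve n (log n - k L + β S)`
for the simple random walk `S` at time `k`. The Berry–Esseen bound for `S` against monotone
functions, which Stein's method gives with error `O(1 / √k)`, yields
`Φ ((log n - k L) / (β √k)) + O(1 / √k)`, which passes through `α` within a bounded distance of the
asserted centre; for `β = 0` the mean is the single value `fillCurve n (log n - k L)`.

Going from `k` to `k + 1` lowers the mean by at least a constant times `1 / √k`: the words with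
`u = O(1)` already contribute that much. So within two levels the mean falls from `α + c / k` to
`α - c / k`. The counts of two distinct words are negatively dependent, hence the variance of the
proportion of filled words is at most `2 ^ (-k) / 4`, and Chebyshev's inequality transfers the
crossing to the random proportion.
-/

open scoped BigOperators ENNReal

/-! ### Sums of random signs -/

section SignSum

variable {k : ℕ}

/-- The position of the simple random walk whose steps are `+1` at the `true` entries of `v` and
`-1` at the others; `𝔼 v, g (signSum v)` is the expectation of `g` at the position after `k`
fair steps. -/
def signSum (v : Fin k → Bool) : ℝ := ∑ j, if v j then 1 else -1

lemma expect_signSum_succ (g : ℝ → ℝ) :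
    𝔼 v : Fin (k + 1) → Bool, g (signSum v) =
      𝔼 v : Fin k → Bool, (g (signSum v + 1) + g (signSum v - 1)) / 2 := by
  have hcons (b : Bool) (v : Fin k → Bool) :
      signSum (Fin.cons b v : Fin (k + 1) → Bool) = (if b then 1 else -1) + signSum v := by
    simp [signSum, Fin.sum_univ_succ]
  rw [← Fintype.expect_equiv (Fin.consEquiv fun _ => Bool)
    (fun x : Bool × (Fin k → Bool) => g ((if x.1 then 1 else -1) + signSum x.2)) _
    (fun x => by rw [← hcons]; rfl), ← Finset.univ_product_univ, Finset.expect_product,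
    Finset.expect_comm]
  refine Finset.expect_congr rfl fun v _ => ?_
  rw [Fintype.expect_eq_sum_div_card, Fintype.sum_bool]
  simp [add_comm, sub_eq_add_neg]

lemma expect_signSum_neg (g : ℝ → ℝ) :
    𝔼 v : Fin k → Bool, g (-signSum v) = 𝔼 v : Fin k → Bool, g (signSum v) := by
  refine Fintype.expect_equiv ((Equiv.refl _).arrowCongr Equiv.boolNot) _ _ fun v => ?_
  congr 1
  rw [signSum, signSum, ← Finset.sum_neg_distrib]
  refine Finset.sum_congr rfl fun j _ => ?_
  cases h : v j <;> simp [h]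

lemma expect_signSum_mul (g : ℝ → ℝ) :
    𝔼 v : Fin (k + 1) → Bool, signSum v * g (signSum v) =
      (k + 1) / 2 * 𝔼 v : Fin k → Bool, (g (signSum v + 1) - g (signSum v - 1)) := by
  induction k generalizing g with
  | zero =>
    rw [expect_signSum_succ fun s => s * g s]
    simp [signSum]
    ring
  | succ k ih =>
    calc 𝔼 v : Fin (k + 2) → Bool, signSum v * g (signSum v)
        = 𝔼 v : Fin (k + 1) → Bool,
            (signSum v * ((g (signSum v + 1) + g (signSum v - 1)) / 2) +
              1 / 2 * (g (signSum v + 1) - g (signSum v - 1))) := by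
          rw [expect_signSum_succ fun s => s * g s]
          exact Finset.expect_congr rfl fun v _ => by ring
      _ = (k + 1) / 2 * 𝔼 v : Fin (k + 1) → Bool, (g (signSum v + 1) - g (signSum v - 1)) +
            1 / 2 * 𝔼 v : Fin (k + 1) → Bool, (g (signSum v + 1) - g (signSum v - 1)) := by
          rw [Finset.expect_add_distrib, ← Finset.mul_expect,
            ih fun s => (g (s + 1) + g (s - 1)) / 2,
            expect_signSum_succ fun s => g (s + 1) - g (s - 1)]
          congr 2
          exact Finset.expect_congr rfl fun v _ => by
            simp only [add_sub_cancel_right, sub_add_cancel]; ring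
      _ = _ := by push_cast; ring

lemma expect_signSum_sq : 𝔼 v : Fin k → Bool, signSum v ^ 2 = k := by
  cases k with
  | zero => simp [signSum]
  | succ k =>
    simp only [sq, expect_signSum_mul fun s => s, add_sub_sub_cancel, one_add_one_eq_two,
      Fintype.expect_const]
    push_cast
    ring

lemma expect_abs_signSum_le : 𝔼 v : Fin k → Bool, |signSum v| ≤ √k := by
  refine Real.le_sqrt_of_sq_le ?_
  rw [← expect_signSum_sq (k := k)]
  simpa using
    Finset.expect_mul_sq_le_sq_mul_sq Finset.univ (fun v : Fin k → Bool => |signSum v|) fun _ => 1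

lemma abs_expect_signSum_add_sub_le {h : ℝ → ℝ} (hb : ∀ s, |h s| ≤ 1) :
    |𝔼 v : Fin k → Bool, (h (signSum v + 1) - h (signSum v - 1))| ≤ 2 / √(k + 1) := by
  have hs : 0 < √((k : ℝ) + 1) := by positivity
  have hstein : |𝔼 v : Fin (k + 1) → Bool, signSum v * h (signSum v)| ≤ √(k + 1) :=
    calc |𝔼 v : Fin (k + 1) → Bool, signSum v * h (signSum v)|
        ≤ 𝔼 v : Fin (k + 1) → Bool, |signSum v| := by
          refine (Finset.abs_expect_le _ _).trans (Finset.expect_le_expect fun v _ => ?_)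
          rw [abs_mul]
          exact mul_le_of_le_one_right (abs_nonneg _) (hb _)
      _ ≤ √(k + 1) := mod_cast expect_abs_signSum_le
  rw [expect_signSum_mul, abs_mul, abs_of_pos (by positivity)] at hstein
  rw [le_div_iff₀ hs]
  nlinarith [Real.sq_sqrt (show (0 : ℝ) ≤ k + 1 by positivity)]

end SignSum

/-! ### Stein's equation for the standard normal distribution -/

section SteinEquation

lemma integral_gaussianReal_zero_one (g : ℝ → ℝ) :
    ∫ t, g t ∂gaussianReal 0 1 = (√(2 * π))⁻¹ * ∫ t, g t * exp (-(t ^ 2 / 2)) := by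
  rw [integral_gaussianReal_eq_integral_smul one_ne_zero, ← integral_const_mul]
  refine integral_congr_ae (Eventually.of_forall fun t => ?_)
  simp only [gaussianPDFReal, NNReal.coe_one, mul_one, sub_zero, smul_eq_mul, neg_div]
  ring

lemma integrable_exp_neg_sq_div_two : Integrable fun t : ℝ => exp (-(t ^ 2 / 2)) := by
  simpa [div_eq_inv_mul] using integrable_exp_neg_mul_sq (b := 1 / 2) (by norm_num)

lemma integral_exp_neg_sq_div_two : ∫ t : ℝ, exp (-(t ^ 2 / 2)) = √(2 * π) := by
  rw [mul_comm, ← div_inv_eq_mul, inv_eq_one_div, ← integral_gaussian]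
  simp [div_eq_inv_mul]

variable {h : ℝ → ℝ}

lemma norm_mul_exp_le (hb : ∀ t, |h t| ≤ 1) (t x : ℝ) : ‖h t * exp x‖ ≤ exp x := by
  rw [norm_mul, Real.norm_eq_abs, Real.norm_eq_abs, abs_exp]
  exact mul_le_of_le_one_left (exp_pos _).le (hb t)

lemma integrable_mul_exp_neg_sq_div_two (hc : Continuous h) (hb : ∀ t, |h t| ≤ 1) :
    Integrable fun t : ℝ => h t * exp (-(t ^ 2 / 2)) :=
  integrable_exp_neg_sq_div_two.mono' (by fun_prop)
    (Eventually.of_forall fun t => norm_mul_exp_le hb t _)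

lemma integral_Ioi_mul_exp_neg_sq_div_two {w : ℝ} (hw : 0 ≤ w) :
    IntegrableOn (fun t : ℝ => t * exp (-(t ^ 2 / 2))) (Set.Ioi w) ∧
      ∫ t in Set.Ioi w, t * exp (-(t ^ 2 / 2)) = exp (-(w ^ 2 / 2)) := by
  have hderiv (x : ℝ) (_ : x ∈ Set.Ici w) :
      HasDerivAt (fun t : ℝ => -exp (-(t ^ 2 / 2))) (x * exp (-(x ^ 2 / 2))) x :=
    (((hasDerivAt_pow 2 x).div_const 2).fun_neg.exp.fun_neg).congr_deriv (by simp; ring)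
  have hpos (x : ℝ) (hx : x ∈ Set.Ioi w) : 0 ≤ x * exp (-(x ^ 2 / 2)) :=
    mul_nonneg (hw.trans (le_of_lt hx)) (exp_pos _).le
  have hlim : Tendsto (fun t : ℝ => -exp (-(t ^ 2 / 2))) atTop (nhds 0) := by
    rw [← neg_zero]
    exact (tendsto_exp_neg_atTop_nhds_zero.comp
      ((tendsto_pow_atTop two_ne_zero).atTop_div_const two_pos)).neg
  refine ⟨integrableOn_Ioi_deriv_of_nonneg' hderiv hpos hlim, ?_⟩
  rw [integral_Ioi_of_hasDerivAt_of_nonneg' hderiv hpos hlim]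
  simp

lemma abs_integral_Ioi_mul_exp_mul_le (hb : ∀ t, |h t| ≤ 1) {w : ℝ} (hw : 0 ≤ w) :
    |∫ t in Set.Ioi w, h t * exp (-(t ^ 2 / 2))| * w ≤ exp (-(w ^ 2 / 2)) := by
  obtain ⟨hint, heq⟩ := integral_Ioi_mul_exp_neg_sq_div_two hw
  nth_rw 2 [← abs_of_nonneg hw]
  rw [← heq, ← abs_mul, ← integral_mul_const, ← Real.norm_eq_abs]
  refine norm_integral_le_of_norm_le hint ?_
  filter_upwards [ae_restrict_mem measurableSet_Ioi] with t ht
  rw [norm_mul, Real.norm_of_nonneg hw, mul_comm]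
  exact mul_le_mul (le_of_lt ht) (norm_mul_exp_le hb t _) (norm_nonneg _)
    (hw.trans (le_of_lt ht))

/-- The solution of Stein's equation `f' w = w * f w + h w`, for `h` of mean zero under the standard
normal distribution. -/
noncomputable def steinSolution (h : ℝ → ℝ) (w : ℝ) : ℝ :=
  exp (w ^ 2 / 2) * ∫ t in Set.Iic w, h t * exp (-(t ^ 2 / 2))

lemma hasDerivAt_steinSolution (hc : Continuous h) (hb : ∀ t, |h t| ≤ 1) (w : ℝ) :
    HasDerivAt (steinSolution h) (w * steinSolution h w + h w) w := by
  have hint := integrable_mul_exp_neg_sq_div_two hc hb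
  have hcont : Continuous fun t : ℝ => h t * exp (-(t ^ 2 / 2)) := by fun_prop
  have hsplit (x : ℝ) : ∫ t in Set.Iic x, h t * exp (-(t ^ 2 / 2)) =
      (∫ t in Set.Iic (0 : ℝ), h t * exp (-(t ^ 2 / 2))) +
        ∫ t in (0 : ℝ)..x, h t * exp (-(t ^ 2 / 2)) := by
    rw [← intervalIntegral.integral_Iic_sub_Iic hint.integrableOn hint.integrableOn,
      add_sub_cancel]
  have hprim : HasDerivAt (fun x => ∫ t in Set.Iic x, h t * exp (-(t ^ 2 / 2)))
      (h w * exp (-(w ^ 2 / 2))) w := by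
    rw [funext hsplit]
    exact (intervalIntegral.integral_hasDerivAt_right hint.intervalIntegrable
      (hcont.stronglyMeasurableAtFilter _ _) hcont.continuousAt).const_add _
  have hexp : HasDerivAt (fun x : ℝ => exp (x ^ 2 / 2)) (exp (w ^ 2 / 2) * w) w :=
    ((hasDerivAt_pow 2 w).div_const 2).exp.congr_deriv (by simp)
  refine (hexp.mul hprim).congr_deriv ?_
  have hinv : exp (w ^ 2 / 2) * exp (-(w ^ 2 / 2)) = 1 := by rw [← exp_add]; simp
  rw [steinSolution]
  linear_combination h w * hinv

lemma abs_integral_Iic_mul_exp_mul_le (hc : Continuous h) (hb : ∀ t, |h t| ≤ 1)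
    (hz : ∫ t, h t * exp (-(t ^ 2 / 2)) = 0) (w : ℝ) :
    |∫ t in Set.Iic w, h t * exp (-(t ^ 2 / 2))| * |w| ≤ exp (-(w ^ 2 / 2)) := by
  rcases le_total 0 w with hw | hw
  · have hint := integrable_mul_exp_neg_sq_div_two hc hb
    have hneg := intervalIntegral.integral_Iic_add_Ioi (b := w) hint.integrableOn hint.integrableOn
    rw [hz, add_eq_zero_iff_eq_neg] at hneg
    rw [hneg, abs_neg, abs_of_nonneg hw]
    exact abs_integral_Ioi_mul_exp_mul_le hb hw
  · have hneg := integral_comp_neg_Ioi (-w) fun t : ℝ => h t * exp (-(t ^ 2 / 2))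
    rw [neg_neg] at hneg
    rw [← hneg, abs_of_nonpos hw]
    simpa using abs_integral_Ioi_mul_exp_mul_le (h := fun t => h (-t)) (fun t => hb (-t))
      (neg_nonneg.2 hw)

lemma abs_mul_steinSolution_le (hc : Continuous h) (hb : ∀ t, |h t| ≤ 1)
    (hz : ∫ t, h t * exp (-(t ^ 2 / 2)) = 0) (w : ℝ) : |w * steinSolution h w| ≤ 1 := by
  calc |w * steinSolution h w|
      = exp (w ^ 2 / 2) * (|∫ t in Set.Iic w, h t * exp (-(t ^ 2 / 2))| * |w|) := by
        rw [steinSolution, abs_mul, abs_mul, abs_exp]; ring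
    _ ≤ exp (w ^ 2 / 2) * exp (-(w ^ 2 / 2)) := by
        gcongr; exact abs_integral_Iic_mul_exp_mul_le hc hb hz w
    _ = 1 := by rw [← exp_add]; simp

lemma abs_steinSolution_le (hc : Continuous h) (hb : ∀ t, |h t| ≤ 1)
    (hz : ∫ t, h t * exp (-(t ^ 2 / 2)) = 0) (w : ℝ) : |steinSolution h w| ≤ 5 := by
  rcases le_total 1 |w| with hw | hw
  · have hmul := abs_mul_steinSolution_le hc hb hz w
    rw [abs_mul] at hmul
    nlinarith [abs_nonneg (steinSolution h w)]
  · have hint : |∫ t in Set.Iic w, h t * exp (-(t ^ 2 / 2))| ≤ √(2 * π) := by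
      rw [← integral_exp_neg_sq_div_two]
      exact (norm_integral_le_of_norm_le integrable_exp_neg_sq_div_two.integrableOn
        (Eventually.of_forall fun t => norm_mul_exp_le hb t _)).trans
        (setIntegral_le_integral integrable_exp_neg_sq_div_two
          (Eventually.of_forall fun t => (exp_pos _).le))
    have hexp : exp (w ^ 2 / 2) ≤ 5 / 3 := by
      have hw2 : w ^ 2 / 2 ≤ 1 / 2 := by nlinarith [sq_abs w, abs_nonneg w]
      have hsq : exp (1 / 2 : ℝ) * exp (1 / 2) = exp 1 := by rw [← exp_add]; norm_num
      nlinarith [exp_le_exp.2 hw2, exp_one_lt_d9, exp_pos (1 / 2 : ℝ)]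
    have hsqrt : √(2 * π) ≤ 3 := by
      rw [Real.sqrt_le_left (by norm_num)]
      linarith [pi_lt_d2]
    rw [steinSolution, abs_mul, abs_exp]
    nlinarith [abs_nonneg (∫ t in Set.Iic w, h t * exp (-(t ^ 2 / 2))), exp_pos (w ^ 2 / 2)]

end SteinEquation

/-! ### A Berry–Esseen bound by Stein's method -/

section BerryEsseen

variable {h : ℝ → ℝ}

lemma abs_steinSolution_sub_le (hc : Continuous h) (hb : ∀ t, |h t| ≤ 1)
    (hz : ∫ t, h t * exp (-(t ^ 2 / 2)) = 0) (x y : ℝ) :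
    |steinSolution h y - steinSolution h x| ≤ 2 * |y - x| := by
  refine convex_univ.norm_image_sub_le_of_norm_hasDerivWithin_le
    (fun w _ => (hasDerivAt_steinSolution hc hb w).hasDerivWithinAt) (fun w _ => ?_)
    trivial trivial
  calc |w * steinSolution h w + h w| ≤ |w * steinSolution h w| + |h w| := abs_add_le _ _
    _ ≤ 1 + 1 := add_le_add (abs_mul_steinSolution_le hc hb hz w) (hb w)
    _ = 2 := by norm_num

lemma abs_steinSolution_deriv_sub_le (hc : Continuous h) (hm : Monotone h) (hb : ∀ t, |h t| ≤ 1)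
    (hz : ∫ t, h t * exp (-(t ^ 2 / 2)) = 0) {a b x y : ℝ} (hx : x ∈ Set.Icc a b)
    (hy : y ∈ Set.Icc a b) :
    |(x * steinSolution h x + h x) - (y * steinSolution h y + h y)| ≤
      (b - a) * (5 + 2 * (|a| + (b - a))) + (h b - h a) := by
  set f := steinSolution h
  obtain ⟨hax, hxb⟩ := hx
  obtain ⟨hay, hyb⟩ := hy
  have hyx : |x - y| ≤ b - a := abs_le.2 ⟨by linarith, by linarith⟩
  have hya : |y| ≤ |a| + (b - a) :=
    calc |y| = |a + (y - a)| := by rw [add_sub_cancel]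
      _ ≤ |a| + |y - a| := abs_add_le _ _
      _ ≤ |a| + (b - a) := by rw [abs_of_nonneg (sub_nonneg.2 hay)]; linarith
  calc |(x * f x + h x) - (y * f y + h y)|
      = |(x - y) * f x + y * (f x - f y) + (h x - h y)| := by ring_nf
    _ ≤ |x - y| * |f x| + |y| * |f x - f y| + |h x - h y| := by
        rw [← abs_mul, ← abs_mul]; exact abs_add_three _ _ _
    _ ≤ (b - a) * 5 + (|a| + (b - a)) * (2 * (b - a)) + (h b - h a) := by
        gcongr
        · exact (abs_nonneg _).trans hyx
        · exact abs_steinSolution_le hc hb hz x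
        · exact (abs_nonneg _).trans hya
        · exact (abs_steinSolution_sub_le hc hb hz y x).trans (by linarith)
        · exact abs_le.2 ⟨by linarith [hm hax, hm hyb], by linarith [hm hxb, hm hay]⟩
    _ = _ := by ring

lemma abs_steinSolution_deriv_sub_slope_le (hc : Continuous h) (hm : Monotone h)
    (hb : ∀ t, |h t| ≤ 1) (hz : ∫ t, h t * exp (-(t ^ 2 / 2)) = 0) {a b : ℝ} (hab : a < b) :
    |((b * steinSolution h b + h b) + (a * steinSolution h a + h a)) / 2 -
        (steinSolution h b - steinSolution h a) / (b - a)| ≤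
      (b - a) * (5 + 2 * (|a| + (b - a))) + (h b - h a) := by
  obtain ⟨ξ, hξ, hslope⟩ := exists_hasDerivAt_eq_slope _ _ hab
    (fun x _ => (hasDerivAt_steinSolution hc hb x).continuousAt.continuousWithinAt)
    (fun x _ => hasDerivAt_steinSolution hc hb x)
  have hξ' := Set.Ioo_subset_Icc_self hξ
  have hleft := abs_le.1 <|
    abs_steinSolution_deriv_sub_le hc hm hb hz (Set.left_mem_Icc.2 hab.le) hξ'
  have hright := abs_le.1 <|
    abs_steinSolution_deriv_sub_le hc hm hb hz (Set.right_mem_Icc.2 hab.le) hξ'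
  rw [← hslope, abs_le]
  constructor <;> linarith

lemma expect_signSum_div_eq (f h : ℝ → ℝ) (k : ℕ) {r : ℝ} (hr : 0 < r) (hr2 : r ^ 2 = k + 1) :
    𝔼 v : Fin (k + 1) → Bool, h (signSum v / r) =
      𝔼 v : Fin k → Bool,
        ((((signSum v + 1) / r * f ((signSum v + 1) / r) + h ((signSum v + 1) / r)) +
          ((signSum v - 1) / r * f ((signSum v - 1) / r) + h ((signSum v - 1) / r))) / 2 -
          r / 2 * (f ((signSum v + 1) / r) - f ((signSum v - 1) / r))) := by
  calc 𝔼 v : Fin (k + 1) → Bool, h (signSum v / r)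
      = 𝔼 v : Fin (k + 1) → Bool, ((signSum v / r * f (signSum v / r) + h (signSum v / r)) -
          1 / r * (signSum v * f (signSum v / r))) :=
        Finset.expect_congr rfl fun v _ => by ring
    _ = _ := by
        rw [Finset.expect_sub_distrib, ← Finset.mul_expect,
          expect_signSum_mul fun s => f (s / r),
          expect_signSum_succ fun s => s / r * f (s / r) + h (s / r), ← mul_assoc,
          Finset.mul_expect, ← Finset.expect_sub_distrib]
        refine Finset.expect_congr rfl fun v _ => ?_
        rw [← hr2]
        field_simp

lemma steinSolution_step_error_le (hc : Continuous h) (hm : Monotone h) (hb : ∀ t, |h t| ≤ 1)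
    (hz : ∫ t, h t * exp (-(t ^ 2 / 2)) = 0) {r : ℝ} (hr : 1 ≤ r) (s : ℝ) :
    |(((s + 1) / r * steinSolution h ((s + 1) / r) + h ((s + 1) / r)) +
          ((s - 1) / r * steinSolution h ((s - 1) / r) + h ((s - 1) / r))) / 2 -
        r / 2 * (steinSolution h ((s + 1) / r) - steinSolution h ((s - 1) / r))| ≤
      22 / r + 4 / r ^ 2 * |s| + (h ((s + 1) / r) - h ((s - 1) / r)) := by
  have hr0 : 0 < r := zero_lt_one.trans_le hr
  have hgap : (s + 1) / r - (s - 1) / r = 2 / r := by ring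
  have hlt : (s - 1) / r < (s + 1) / r := by gcongr; linarith
  have habs : |(s - 1) / r| ≤ |s| / r + 1 / r := by
    rw [abs_div, abs_of_pos hr0, ← add_div]
    gcongr
    simpa using abs_sub s 1
  have hsmall : 2 / r * (5 + 2 * (|(s - 1) / r| + 2 / r)) ≤ 22 / r + 4 / r ^ 2 * |s| :=
    calc 2 / r * (5 + 2 * (|(s - 1) / r| + 2 / r))
        ≤ 2 / r * (5 + 2 * (|s| / r + 1 / r + 2 / r)) := by gcongr
      _ = 10 / r + 12 / r * (1 / r) + 4 / r ^ 2 * |s| := by field_simp; ring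
      _ ≤ 10 / r + 12 / r * 1 + 4 / r ^ 2 * |s| := by
          gcongr
          exact (div_le_one hr0).2 hr
      _ = 22 / r + 4 / r ^ 2 * |s| := by ring
  have hslope := abs_steinSolution_deriv_sub_slope_le hc hm hb hz hlt
  rw [hgap, div_div_eq_mul_div, mul_comm _ r, mul_div_right_comm r] at hslope
  linarith

lemma integral_sub_integral_gaussianReal_mul_exp (hc : Continuous h) (hb : ∀ t, |h t| ≤ 1) :
    ∫ t, (h t - ∫ s, h s ∂gaussianReal 0 1) * exp (-(t ^ 2 / 2)) = 0 := by
  simp only [sub_mul]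
  rw [integral_sub (integrable_mul_exp_neg_sq_div_two hc hb)
    (integrable_exp_neg_sq_div_two.const_mul _), integral_const_mul, integral_exp_neg_sq_div_two,
    integral_gaussianReal_zero_one]
  have : 0 < √(2 * π) := by positivity
  field_simp
  ring

lemma abs_expect_signSum_div_sqrt_le (hc : Continuous h) (hm : Monotone h) (hb : ∀ t, |h t| ≤ 1)
    (hz : ∫ t, h t * exp (-(t ^ 2 / 2)) = 0) (k : ℕ) :
    |𝔼 v : Fin (k + 1) → Bool, h (signSum v / √(k + 1))| ≤ 28 / √(k + 1) := by
  set r := √((k : ℝ) + 1)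
  have hr2 : r ^ 2 = k + 1 := Real.sq_sqrt (by positivity)
  have hr : 1 ≤ r := Real.one_le_sqrt.2 (by simp)
  have hr0 : 0 < r := zero_lt_one.trans_le hr
  have hsum : 𝔼 v : Fin k → Bool, |signSum v| ≤ r :=
    expect_abs_signSum_le.trans (Real.sqrt_le_sqrt (by simp))
  have hsmooth : 𝔼 v : Fin k → Bool, (h ((signSum v + 1) / r) - h ((signSum v - 1) / r)) ≤ 2 / r :=
    (le_abs_self _).trans
      (abs_expect_signSum_add_sub_le (k := k) (h := fun s => h (s / r)) fun s => hb _)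
  calc |𝔼 v : Fin (k + 1) → Bool, h (signSum v / r)|
      ≤ 𝔼 v : Fin k → Bool, (22 / r + 4 / r ^ 2 * |signSum v| +
          (h ((signSum v + 1) / r) - h ((signSum v - 1) / r))) := by
        rw [expect_signSum_div_eq (steinSolution h) h k hr0 hr2]
        exact (Finset.abs_expect_le _ _).trans (Finset.expect_le_expect fun v _ =>
          steinSolution_step_error_le hc hm hb hz hr (signSum v))
    _ = 22 / r + 4 / r ^ 2 * 𝔼 v : Fin k → Bool, |signSum v| +
          𝔼 v : Fin k → Bool, (h ((signSum v + 1) / r) - h ((signSum v - 1) / r)) := by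
        rw [Finset.expect_add_distrib, Finset.expect_add_distrib, Fintype.expect_const,
          Finset.mul_expect]
    _ ≤ 22 / r + 4 / r ^ 2 * r + 2 / r := by gcongr
    _ = 28 / r := by field_simp; ring

lemma abs_expect_signSum_div_sqrt_sub_le (hc : Continuous h) (hm : Monotone h)
    (h0 : ∀ t, 0 ≤ h t) (h1 : ∀ t, h t ≤ 1) {k : ℕ} (hk : 0 < k) :
    |𝔼 v : Fin k → Bool, h (signSum v / √k) - ∫ t, h t ∂gaussianReal 0 1| ≤ 28 / √k := by
  obtain ⟨k, rfl⟩ := Nat.exists_eq_add_one_of_ne_zero hk.ne'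
  set c := ∫ t, h t ∂gaussianReal 0 1
  have hb (t : ℝ) : |h t| ≤ 1 := abs_le.2 ⟨by linarith [h0 t], h1 t⟩
  have hc0 : 0 ≤ c := integral_nonneg h0
  have hc1 : c ≤ 1 := (le_abs_self c).trans <| by
    simpa using norm_integral_le_of_norm_le_const (μ := gaussianReal 0 1) (f := h)
      (Eventually.of_forall hb)
  simpa [Finset.expect_sub_distrib] using
    abs_expect_signSum_div_sqrt_le (h := fun t => h t - c) (by fun_prop)
      (fun x y hxy => sub_le_sub_right (hm hxy) c)
      (fun t => abs_le.2 ⟨by linarith [h0 t], by linarith [h1 t]⟩)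
      (integral_sub_integral_gaussianReal_mul_exp hc hb) k

end BerryEsseen

/-! ### Smoothed steps along a random walk -/

section SmoothedStep

/-- A monotone `[0, 1]`-valued continuous function that approaches the step function at `0`
exponentially fast; the constant `3` is large enough for `fillCurve n` and for the ramp
`max 0 (min u 1)`. -/
structure IsSmoothedStep (g : ℝ → ℝ) : Prop where
  continuous : Continuous g
  monotone : Monotone g
  nonneg (u : ℝ) : 0 ≤ g u
  le_one (u : ℝ) : g u ≤ 1
  abs_sub_step_le (u : ℝ) : |g u - if 0 ≤ u then 1 else 0| ≤ 3 * exp (-|u|)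

lemma isSmoothedStep_max_min : IsSmoothedStep fun u => max 0 (min u 1) where
  continuous := by fun_prop
  monotone _ _ huv := by dsimp only; gcongr
  nonneg _ := le_max_left _ _
  le_one _ := max_le zero_le_one (min_le_right _ _)
  abs_sub_step_le u := by
    rcases lt_or_ge u 0 with hu | hu
    · simp [hu.not_ge, max_eq_left ((min_le_left u 1).trans hu.le), (exp_pos _).le]
    · rw [if_pos hu, abs_of_nonneg hu, max_eq_right (le_min hu zero_le_one), abs_le]
      have hexp := exp_pos (-u)
      constructor <;> rcases min_cases u 1 with ⟨hmin, _⟩ | ⟨hmin, _⟩ <;> rw [hmin] <;>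
        linarith [add_one_le_exp (-u)]

lemma integral_exp_neg_mul_abs_sub {l : ℝ} (hl : 0 < l) (y : ℝ) :
    ∫ t : ℝ, exp (-(l * |t - y|)) = 2 / l := by
  rw [integral_sub_right_eq_self (fun t : ℝ => exp (-(l * |t|))) y,
    integral_comp_abs (f := fun t : ℝ => exp (-(l * t)))]
  simp only [← neg_mul]
  rw [integral_exp_mul_Ioi (neg_lt_zero.2 hl)]
  simp [div_eq_mul_inv]

lemma integrable_exp_neg_mul_abs_sub {l : ℝ} (hl : 0 < l) (y : ℝ) :
    Integrable fun t : ℝ => exp (-(l * |t - y|)) :=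
  .of_integral_ne_zero (by rw [integral_exp_neg_mul_abs_sub hl]; positivity)

lemma integral_exp_neg_mul_abs_sub_gaussianReal_le {l : ℝ} (hl : 0 < l) (y : ℝ) :
    ∫ t, exp (-(l * |t - y|)) ∂gaussianReal 0 1 ≤ 2 / l := by
  rw [integral_gaussianReal_zero_one, ← integral_exp_neg_mul_abs_sub hl y]
  refine (mul_le_of_le_one_left (integral_nonneg fun t => by positivity) <|
    inv_le_one_of_one_le₀ <| Real.one_le_sqrt.2 <| by linarith [pi_gt_three]).trans ?_
  refine integral_mono_of_nonneg (Eventually.of_forall fun t => by positivity)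
    (integrable_exp_neg_mul_abs_sub hl y) (Eventually.of_forall fun t => ?_)
  exact mul_le_of_le_one_right (exp_pos _).le (exp_le_one_iff.2 (neg_nonpos.2 (by positivity)))

lemma integral_gaussianReal_comp_neg (g : ℝ → ℝ) :
    ∫ t, g (-t) ∂gaussianReal 0 1 = ∫ t, g t ∂gaussianReal 0 1 := by
  rw [integral_gaussianReal_zero_one, integral_gaussianReal_zero_one,
    ← integral_neg_eq_self fun t => g t * exp (-(t ^ 2 / 2))]
  simp

variable {g : ℝ → ℝ}

lemma IsSmoothedStep.abs_integral_sub_cdf_le (hg : IsSmoothedStep g) {l : ℝ} (hl : 0 < l) (y : ℝ) :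
    |∫ t, g (l * (y - t)) ∂gaussianReal 0 1 - cdf (gaussianReal 0 1) y| ≤ 6 / l := by
  have hstep (t : ℝ) :
      (if 0 ≤ l * (y - t) then 1 else 0) = (Set.Iic y).indicator (1 : ℝ → ℝ) t := by
    simp [Set.indicator_apply, mul_nonneg_iff_of_pos_left hl]
  have hint : Integrable (fun t => g (l * (y - t))) (gaussianReal 0 1) :=
    .of_bound (hg.continuous.comp (by fun_prop)).aestronglyMeasurable 1
      (Eventually.of_forall fun t => by
        rw [Real.norm_of_nonneg (hg.nonneg _)]; exact hg.le_one _)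
  have hind : Integrable ((Set.Iic y).indicator (1 : ℝ → ℝ)) (gaussianReal 0 1) :=
    (integrable_const 1).indicator measurableSet_Iic
  have hexp : Integrable (fun t => 3 * exp (-(l * |t - y|))) (gaussianReal 0 1) :=
    .of_bound (by fun_prop) 3 (Eventually.of_forall fun t => by
      rw [Real.norm_of_nonneg (by positivity)]
      exact mul_le_of_le_one_right (by norm_num) (exp_le_one_iff.2 (neg_nonpos.2 (by positivity))))
  rw [cdf_eq_real, ← integral_indicator_one measurableSet_Iic, ← integral_sub hint hind,
    ← Real.norm_eq_abs]
  calc ‖∫ t, (g (l * (y - t)) - (Set.Iic y).indicator 1 t) ∂gaussianReal 0 1‖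
      ≤ ∫ t, 3 * exp (-(l * |t - y|)) ∂gaussianReal 0 1 := by
        refine norm_integral_le_of_norm_le hexp (Eventually.of_forall fun t => ?_)
        have h := hg.abs_sub_step_le (l * (y - t))
        rwa [hstep, abs_mul, abs_of_pos hl, abs_sub_comm y t] at h
    _ ≤ 3 * (2 / l) := by
        rw [integral_const_mul]
        gcongr
        exact integral_exp_neg_mul_abs_sub_gaussianReal_le hl y
    _ = 6 / l := by ring

lemma IsSmoothedStep.abs_expect_sub_cdf_le (hg : IsSmoothedStep g) {β : ℝ} (hβ : 0 < β) (τ : ℝ)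
    {k : ℕ} (hk : 0 < k) :
    |𝔼 v : Fin k → Bool, g (τ + β * signSum v) - cdf (gaussianReal 0 1) (τ / (β * √k))| ≤
      (28 + 6 / β) / √k := by
  have : 0 < √(k : ℝ) := by positivity
  set l := β * √k with hl_def
  have hl : 0 < l := by positivity
  have hscale (s : ℝ) : l * (τ / l + s / √k) = τ + β * s := by rw [hl_def]; field_simp
  have hclt := abs_expect_signSum_div_sqrt_sub_le (h := fun t => g (l * (τ / l + t)))
    (hg.continuous.comp (by fun_prop)) (fun s t hst => hg.monotone (by gcongr))
    (fun t => hg.nonneg _) (fun t => hg.le_one _) hk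
  simp only [hscale] at hclt
  rw [← integral_gaussianReal_comp_neg] at hclt
  simp only [← sub_eq_add_neg] at hclt
  calc _ ≤ _ := abs_sub_le _ _ _
    _ ≤ 28 / √k + 6 / l := add_le_add hclt (hg.abs_integral_sub_cdf_le hl _)
    _ = (28 + 6 / β) / √k := by rw [hl_def]; field_simp

lemma mul_le_cdf_gaussianReal_sub {Y a b : ℝ} (hab : a ≤ b) (ha : -Y ≤ a) (hb : b ≤ Y) :
    (√(2 * π))⁻¹ * exp (-(Y ^ 2 / 2)) * (b - a) ≤
      cdf (gaussianReal 0 1) b - cdf (gaussianReal 0 1) a := by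
  have hcdf (y : ℝ) : cdf (gaussianReal 0 1) y =
      (√(2 * π))⁻¹ * ∫ t in Set.Iic y, exp (-(t ^ 2 / 2)) := by
    rw [cdf_eq_real, ← integral_indicator_one measurableSet_Iic, integral_gaussianReal_zero_one,
      ← integral_indicator measurableSet_Iic]
    simp only [Set.indicator_apply, Pi.one_apply, ite_mul, one_mul, zero_mul]
  rw [hcdf, hcdf, ← mul_sub, mul_assoc, intervalIntegral.integral_Iic_sub_Iic
    integrable_exp_neg_sq_div_two.integrableOn integrable_exp_neg_sq_div_two.integrableOn]
  gcongr
  calc exp (-(Y ^ 2 / 2)) * (b - a) = ∫ _ in a..b, exp (-(Y ^ 2 / 2)) := by simp [mul_comm]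
    _ ≤ ∫ t in a..b, exp (-(t ^ 2 / 2)) :=
      intervalIntegral.integral_mono_on hab (by simp)
        integrable_exp_neg_sq_div_two.intervalIntegrable
        fun t ht => exp_le_exp.2 (by nlinarith [ht.1, ht.2])

end SmoothedStep

/-! ### The probability that a word is filled -/

section FillProb

/-- The probability that at least two of `n` independent events of probability `x` occur. -/
noncomputable def fillProb (n : ℕ) (x : ℝ) : ℝ := 1 - (1 - x) ^ n - n * x * (1 - x) ^ (n - 1)

variable {n : ℕ} {x y : ℝ}

lemma hasDerivAt_fillProb (n : ℕ) (x : ℝ) :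
    HasDerivAt (fillProb n) (n * (n - 1 : ℕ) * x * (1 - x) ^ (n - 2)) x := by
  have hpow (m : ℕ) : HasDerivAt (fun y : ℝ => (1 - y) ^ m) (m * (1 - x) ^ (m - 1) * -1) x :=
    ((hasDerivAt_id x).const_sub 1).pow m
  have hlin : HasDerivAt (fun y : ℝ => n * y) n x := by
    simpa using (hasDerivAt_id x).const_mul (n : ℝ)
  exact (((hpow n).const_sub 1).sub (hlin.mul (hpow (n - 1)))).congr_deriv (by
    rw [Nat.sub_sub]; ring)

lemma fillProb_monotoneOn (n : ℕ) : MonotoneOn (fillProb n) (Set.Icc 0 1) := by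
  refine monotoneOn_of_deriv_nonneg (convex_Icc 0 1)
    (fun x _ => (hasDerivAt_fillProb n x).continuousAt.continuousWithinAt)
    (fun x _ => (hasDerivAt_fillProb n x).differentiableAt.differentiableWithinAt) fun x hx => ?_
  rw [interior_Icc] at hx
  rw [(hasDerivAt_fillProb n x).deriv]
  have h1x : 0 ≤ 1 - x := sub_nonneg.2 hx.2.le
  have h0x := hx.1.le
  positivity

lemma fillProb_nonneg (hx0 : 0 ≤ x) (hx1 : x ≤ 1) : 0 ≤ fillProb n x := by
  simpa [fillProb] using fillProb_monotoneOn n (Set.left_mem_Icc.2 zero_le_one) ⟨hx0, hx1⟩ hx0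

lemma fillProb_le_one_sub_pow (hx0 : 0 ≤ x) (hx1 : x ≤ 1) : fillProb n x ≤ 1 - (1 - x) ^ n := by
  have : 0 ≤ 1 - x := sub_nonneg.2 hx1
  exact sub_le_self _ (by positivity)

lemma fillProb_le_one (hx0 : 0 ≤ x) (hx1 : x ≤ 1) : fillProb n x ≤ 1 :=
  (fillProb_le_one_sub_pow hx0 hx1).trans (sub_le_self _ (pow_nonneg (sub_nonneg.2 hx1) n))

lemma fillProb_le_mul (hx0 : 0 ≤ x) (hx1 : x ≤ 1) : fillProb n x ≤ n * x := by
  have hbernoulli := one_add_mul_le_pow (a := -x) (by linarith) n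
  rw [← sub_eq_add_neg] at hbernoulli
  linarith [fillProb_le_one_sub_pow (n := n) hx0 hx1]

lemma one_sub_fillProb_mul_le (hx0 : 0 ≤ x) (hx1 : x ≤ 1) :
    (1 - fillProb n x) * (n * x) ≤ 3 := by
  rcases n with _ | m
  · simp
  have hz : 0 ≤ m * x := by positivity
  have hpow : (1 - x) ^ m ≤ exp (-(m * x)) := by
    rw [← mul_neg, exp_nat_mul]
    exact pow_le_pow_left₀ (sub_nonneg.2 hx1) (one_sub_le_exp_neg x) m
  calc (1 - fillProb (m + 1) x) * ((m + 1 : ℕ) * x)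
      = (1 - x) ^ m * ((1 + m * x) * (m * x + x)) := by
        simp only [fillProb, Nat.add_sub_cancel]; push_cast; ring
    _ ≤ exp (-(m * x)) * ((1 + m * x) * (m * x + 1)) := by gcongr
    _ ≤ exp (-(m * x)) * (3 * exp (m * x)) := by
        refine mul_le_mul_of_nonneg_left ?_ (exp_pos _).le
        nlinarith [quadratic_le_exp_of_nonneg hz]
    _ = 3 := by rw [mul_left_comm, ← exp_add]; simp

lemma exp_neg_two_mul_le_one_sub (hx0 : 0 ≤ x) (hx : x ≤ 1 / 2) : exp (-(2 * x)) ≤ 1 - x := by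
  rw [exp_neg]
  refine inv_le_of_inv_le₀ (by linarith) ?_
  calc (1 - x)⁻¹ ≤ 2 * x + 1 := by
        rw [inv_le_iff_one_le_mul₀ (by linarith)]
        nlinarith
    _ ≤ exp (2 * x) := add_one_le_exp _

lemma le_fillProb_sub_fillProb (hy : 0 ≤ y) (hyx : y ≤ x) (hx : x ≤ 1 / 2) :
    n * (n - 1 : ℕ) * y * exp (-(2 * (n * x))) * (x - y) ≤ fillProb n x - fillProb n y := by
  refine (convex_Icc y x).mul_sub_le_image_sub_of_le_deriv
    (fun z _ => (hasDerivAt_fillProb n z).continuousAt.continuousWithinAt)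
    (fun z _ => (hasDerivAt_fillProb n z).differentiableAt.differentiableWithinAt)
    (fun z hz => ?_) y (Set.left_mem_Icc.2 hyx) x (Set.right_mem_Icc.2 hyx) hyx
  obtain ⟨hyz, hzx⟩ := interior_subset hz
  have hpow : exp (-(2 * (n * x))) ≤ (1 - z) ^ (n - 2) :=
    calc exp (-(2 * (n * x))) = exp (-(2 * x)) ^ n := by rw [← exp_nat_mul]; ring_nf
      _ ≤ (1 - x) ^ n := by gcongr; exact exp_neg_two_mul_le_one_sub (hy.trans hyx) hx
      _ ≤ (1 - z) ^ n := by gcongr; linarith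
      _ ≤ (1 - z) ^ (n - 2) :=
        pow_le_pow_of_le_one (by linarith) (by linarith) (Nat.sub_le _ _)
  have hz0 : 0 ≤ z := hy.trans hyz
  rw [(hasDerivAt_fillProb n z).deriv]
  gcongr

/-- The probability that a word is filled by `n` strings, as a function of the logarithm `u` of the
expected number of strings that start with it; it equals `fillProb n 1` once `exp u > n`, so that it
is monotone on the whole line. -/
noncomputable def fillCurve (n : ℕ) (u : ℝ) : ℝ := fillProb n (min (exp u / n) 1)

lemma isSmoothedStep_fillCurve (hn : 2 ≤ n) : IsSmoothedStep (fillCurve n) := by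
  have hn0 : (0 : ℝ) < n := by positivity
  have hmem (u : ℝ) : min (exp u / n) 1 ∈ Set.Icc (0 : ℝ) 1 :=
    ⟨by positivity, min_le_right _ _⟩
  have hcont : Continuous (fillProb n) :=
    continuous_iff_continuousAt.2 fun x => (hasDerivAt_fillProb n x).continuousAt
  have hle (u : ℝ) : fillCurve n u ≤ exp u :=
    calc fillCurve n u ≤ n * min (exp u / n) 1 := fillProb_le_mul (hmem u).1 (hmem u).2
      _ ≤ n * (exp u / n) := by gcongr; exact min_le_left _ _
      _ = exp u := by field_simp
  have hge (u : ℝ) : 1 - fillCurve n u ≤ 3 * exp (-u) := by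
    rcases le_total (exp u / n) 1 with h | h
    · have hmul := one_sub_fillProb_mul_le (n := n) (by positivity) h
      rw [mul_div_cancel₀ _ hn0.ne'] at hmul
      rwa [fillCurve, min_eq_left h, exp_neg, ← div_eq_mul_inv, le_div_iff₀ (exp_pos u)]
    · simp [fillCurve, min_eq_right h, fillProb, show n ≠ 0 by omega, show n - 1 ≠ 0 by omega,
        (exp_pos _).le]
  refine ⟨hcont.comp (by fun_prop),
    fun u v huv => fillProb_monotoneOn n (hmem u) (hmem v) (by gcongr),
    fun u => fillProb_nonneg (hmem u).1 (hmem u).2,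
    fun u => fillProb_le_one (hmem u).1 (hmem u).2, fun u => ?_⟩
  have h0 : 0 ≤ fillCurve n u := fillProb_nonneg (hmem u).1 (hmem u).2
  have h1 : fillCurve n u ≤ 1 := fillProb_le_one (hmem u).1 (hmem u).2
  rcases lt_or_ge u 0 with hu | hu
  · rw [if_neg hu.not_ge, sub_zero, abs_of_nonneg h0, abs_of_neg hu, neg_neg]
    linarith [hle u, exp_pos u]
  · rw [if_pos hu, abs_sub_comm, abs_of_nonneg (sub_nonneg.2 h1), abs_of_nonneg hu]
    exact hge u

lemma exists_le_fillCurve_sub {d : ℝ} (hd : 0 < d) (M : ℝ) :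
    ∃ c > 0, ∀ᶠ n : ℕ in atTop, ∀ u, |u| ≤ M → c ≤ fillCurve n u - fillCurve n (u - d) := by
  have hd1 : exp (-d) < 1 := Real.exp_lt_one_iff.2 (neg_lt_zero.2 hd)
  refine ⟨1 / 2 * exp (-M - d) * exp (-(2 * exp M)) * (exp (-M) * (1 - exp (-d))),
    by have := sub_pos.2 hd1; positivity, ?_⟩
  filter_upwards [eventually_ge_atTop 2,
    tendsto_natCast_atTop_atTop.eventually_ge_atTop (2 * exp M)] with n hn hnM u hu
  have hn0 : (0 : ℝ) < n := by positivity
  obtain ⟨hMu, huM⟩ := abs_le.1 hu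
  have hx : exp u / n ≤ 1 / 2 := by
    rw [div_le_iff₀ hn0]
    linarith [exp_le_exp.2 huM]
  have hyx : exp (u - d) / n ≤ exp u / n := by gcongr; linarith
  have hpred : (1 / 2 : ℝ) ≤ (n - 1 : ℕ) / n := by
    rw [le_div_iff₀ hn0, Nat.cast_pred (by omega)]
    have : (2 : ℝ) ≤ n := mod_cast hn
    linarith
  calc 1 / 2 * exp (-M - d) * exp (-(2 * exp M)) * (exp (-M) * (1 - exp (-d)))
      ≤ (n - 1 : ℕ) / n * exp (u - d) * exp (-(2 * exp u)) * (exp u * (1 - exp (-d))) := by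
        have := sub_nonneg.2 hd1.le
        gcongr
    _ = n * (n - 1 : ℕ) * (exp (u - d) / n) * exp (-(2 * (n * (exp u / n)))) *
          (exp u / n - exp (u - d) / n) := by
        rw [mul_div_cancel₀ _ hn0.ne', mul_sub, mul_one, ← exp_add, ← sub_eq_add_neg]
        field_simp
    _ ≤ fillCurve n u - fillCurve n (u - d) := by
        rw [fillCurve, fillCurve, min_eq_left (by linarith), min_eq_left (by linarith)]
        exact le_fillProb_sub_fillProb (by positivity) hyx hx

end FillProb

/-! ### The mean proportion of filled words -/

section FillMean

variable {L β : ℝ} {n : ℕ}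

/-- The expected proportion of filled words of length `k` for `n` strings, in terms of
`L = log (1 / √(p q))` and `β = |log (p / q)| / 2`: up to the symmetry `s ↦ -s`, a word with sign
sum `s` has probability `exp (-k L + β s)`. -/
noncomputable def fillMean (L β : ℝ) (n k : ℕ) : ℝ :=
  𝔼 v : Fin k → Bool, fillCurve n (log n - k * L + β * signSum v)

/-- The decrease of `fillMean` from one level to the next, contributed by the words for which the
logarithm of the expected number of strings is `u`. -/
noncomputable def fillDrop (L β : ℝ) (n : ℕ) (u : ℝ) : ℝ :=
  fillCurve n u - (fillCurve n (u - L + β) + fillCurve n (u - L - β)) / 2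

/-- The normal approximation of `fillMean L β n k` is the normal distribution function at this
point. -/
noncomputable def fillScore (L β : ℝ) (n k : ℕ) : ℝ := (log n - k * L) / (β * √k)

lemma fillMean_sub_fillMean_succ (L β : ℝ) (n k : ℕ) :
    fillMean L β n k - fillMean L β n (k + 1) =
      𝔼 v : Fin k → Bool, fillDrop L β n (log n - k * L + β * signSum v) := by
  rw [fillMean, fillMean,
    expect_signSum_succ fun s => fillCurve n (log n - (k + 1 : ℕ) * L + β * s),
    ← Finset.expect_sub_distrib]
  refine Finset.expect_congr rfl fun v _ => ?_
  rw [fillDrop]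
  congr 4 <;> push_cast <;> ring

lemma fillDrop_nonneg (hβ : 0 ≤ β) (hβL : β ≤ L) (hn : 2 ≤ n) (u : ℝ) :
    0 ≤ fillDrop L β n u := by
  have hmono := (isSmoothedStep_fillCurve hn).monotone
  rw [fillDrop]
  linarith [hmono (show u - L + β ≤ u by linarith), hmono (show u - L - β ≤ u by linarith)]

lemma exists_le_fillDrop (hβ : 0 ≤ β) (hβL : β < L) (M : ℝ) :
    ∃ c > 0, ∀ᶠ n : ℕ in atTop, ∀ u, |u| ≤ M → c ≤ fillDrop L β n u := by
  obtain ⟨c, hc, hcurve⟩ := exists_le_fillCurve_sub (sub_pos.2 hβL) M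
  refine ⟨c / 2, by positivity, ?_⟩
  filter_upwards [hcurve, eventually_ge_atTop 2] with n hcurve hn u hu
  have hmono := (isSmoothedStep_fillCurve hn).monotone (show u - L - β ≤ u by linarith)
  have hc := hcurve u hu
  rw [← sub_add] at hc
  rw [fillDrop]
  linarith

/-- The window width `A` is taken so large that the normal probability of the window exceeds the
error of the normal approximation, which has the same order `1 / √k`. -/
lemma exists_one_div_sqrt_le_expect_ramp_sub (hβ : 0 < β) (Y : ℝ) :
    ∃ A > 0, ∀ᶠ k : ℕ in atTop, ∀ τ : ℝ, |τ / (β * √k)| ≤ Y →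
      1 / √k ≤ 𝔼 v : Fin k → Bool,
        (max 0 (min (τ + β * signSum v) 1) - max 0 (min (τ - A + β * signSum v) 1)) := by
  set φ := (√(2 * π))⁻¹ * exp (-((Y + 1) ^ 2 / 2)) with hφ
  have hφ0 : 0 < φ := by positivity
  set E := 28 + 6 / β
  set A := β * (2 * E + 1) / φ with hA
  have hA0 : 0 < A := by positivity
  refine ⟨A, hA0, ?_⟩
  filter_upwards [eventually_gt_atTop 0,
    tendsto_natCast_atTop_atTop.eventually_ge_atTop ((A / β) ^ 2)] with k hk hkA τ hτ
  have hr : 0 < √(k : ℝ) := Real.sqrt_pos.2 (mod_cast hk)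
  have hδ0 : 0 < A / (β * √k) := by positivity
  have hδ1 : A / (β * √k) ≤ 1 := by
    rw [← div_div, div_le_one hr]
    exact Real.le_sqrt_of_sq_le hkA
  have hτA := abs_le.1 (isSmoothedStep_max_min.abs_expect_sub_cdf_le hβ (τ - A) hk)
  have hτ0 := abs_le.1 (isSmoothedStep_max_min.abs_expect_sub_cdf_le hβ τ hk)
  obtain ⟨hτl, hτu⟩ := abs_le.1 hτ
  rw [sub_div] at hτA
  have hcdf := mul_le_cdf_gaussianReal_sub (Y := Y + 1)
    (sub_le_self (τ / (β * √k)) hδ0.le) (by linarith) (by linarith)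
  have hgain : φ * (τ / (β * √k) - (τ / (β * √k) - A / (β * √k))) = E / √k + E / √k + 1 / √k := by
    rw [hA]
    field_simp
    ring
  rw [← hφ, hgain] at hcdf
  rw [Finset.expect_sub_distrib]
  linarith [hτA.2, hτ0.1]

lemma mul_ramp_sub_le {D : ℝ → ℝ} {A c : ℝ} (hA : 0 ≤ A) (hD : ∀ u, 0 ≤ D u) (hc : 0 ≤ c)
    (hcD : ∀ u, |u| ≤ A + 1 → c ≤ D u) (u : ℝ) :
    c * (max 0 (min u 1) - max 0 (min (u - A) 1)) ≤ D u := by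
  rcases lt_or_ge u 0 with hu0 | hu0
  · rw [min_eq_left (by linarith), max_eq_left hu0.le, zero_sub, mul_neg]
    exact (neg_nonpos.2 (by positivity)).trans (hD u)
  rcases lt_or_ge (A + 1) u with huA | huA
  · rw [min_eq_right (by linarith), min_eq_right (by linarith), sub_self, mul_zero]
    exact hD u
  · refine (mul_le_of_le_one_right hc ?_).trans
      (hcD u (abs_le.2 ⟨by linarith, huA⟩))
    linarith [isSmoothedStep_max_min.le_one u, isSmoothedStep_max_min.nonneg (u - A)]

lemma exists_div_sqrt_le_fillMean_sub (hβ : 0 < β) (hβL : β < L) (Y : ℝ) :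
    ∃ c > 0, ∃ k₀ : ℕ, ∀ᶠ n : ℕ in atTop, ∀ k ≥ k₀, |fillScore L β n k| ≤ Y →
      c / √k ≤ fillMean L β n k - fillMean L β n (k + 1) := by
  obtain ⟨A, hA, hramp⟩ := exists_one_div_sqrt_le_expect_ramp_sub hβ Y
  obtain ⟨k₀, hramp⟩ := eventually_atTop.1 hramp
  obtain ⟨c, hc, hdrop⟩ := exists_le_fillDrop hβ.le hβL (A + 1)
  refine ⟨c, hc, k₀, ?_⟩
  filter_upwards [hdrop, eventually_ge_atTop 2] with n hdrop hn k hk hY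
  rw [fillMean_sub_fillMean_succ, ← mul_one_div]
  refine (mul_le_mul_of_nonneg_left (hramp k hk _ hY) hc.le).trans ?_
  rw [Finset.mul_expect]
  refine Finset.expect_le_expect fun v _ => ?_
  rw [sub_add_eq_add_sub _ A]
  exact mul_ramp_sub_le hA.le (fillDrop_nonneg hβ.le hβL.le hn) hc.le hdrop _

lemma abs_fillMean_sub_cdf_le (hβ : 0 < β) {k : ℕ} (hn : 2 ≤ n) (hk : 0 < k) :
    |fillMean L β n k - cdf (gaussianReal 0 1) (fillScore L β n k)| ≤ (28 + 6 / β) / √k :=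
  (isSmoothedStep_fillCurve hn).abs_expect_sub_cdf_le hβ _ hk

end FillMean

/-! ### The level where the mean crosses `α` -/

section Crossing

variable {L β x α : ℝ}

/-- The approximate solution `k` of `fillMean L β n k = α`, for `t = log n` and `Φ x = α`. -/
noncomputable def center (L β x t : ℝ) : ℝ := t / L - β / L ^ ((3 : ℝ) / 2) * x * √t

lemma center_eq (hL : 0 < L) {t : ℝ} (ht : 0 ≤ t) :
    center L β x t = √(t / L) ^ 2 - β * x / L * √(t / L) := by
  have hL32 : L ^ ((3 : ℝ) / 2) = L * √L := by
    rw [Real.sqrt_eq_rpow, show (3 : ℝ) / 2 = 1 + 1 / 2 by norm_num, rpow_add hL, rpow_one]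
  have : 0 < √L := Real.sqrt_pos.2 hL
  rw [center, hL32, Real.sq_sqrt (by positivity), Real.sqrt_div ht]
  field_simp

lemma tendsto_sqrt_log_div (hL : 0 < L) :
    Tendsto (fun n : ℕ => √(log n / L)) atTop atTop :=
  Real.tendsto_sqrt_atTop.comp
    ((Real.tendsto_log_atTop.comp tendsto_natCast_atTop_atTop).atTop_div_const hL)

lemma tendsto_center (hL : 0 < L) (β x : ℝ) :
    Tendsto (fun n : ℕ => center L β x (log n)) atTop atTop := by
  have hroot := tendsto_sqrt_log_div hL
  refine (hroot.atTop_mul_atTop₀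
    (tendsto_atTop_add_const_right _ (-(β * x / L)) hroot)).congr fun n => ?_
  rw [center_eq hL (log_natCast_nonneg n)]
  ring

lemma eventually_le_of_abs_sub_center_le (hL : 0 < L) (β x C M : ℝ) :
    ∀ᶠ n : ℕ in atTop, ∀ k : ℕ, |k - center L β x (log n)| ≤ C → M ≤ k := by
  filter_upwards [(tendsto_center hL β x).eventually_ge_atTop (C + M)] with n hn k hk
  linarith [(abs_le.1 hk).1]

lemma abs_sqrt_sub_sqrt_le (hL : 0 < L) {t k C : ℝ} (ht : 0 ≤ t) (hk : 0 ≤ k) (hC : 0 < C)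
    (hCt : C ≤ √(t / L)) (hkC : |k - center L β x t| ≤ C) :
    |√(t / L) - √k| ≤ |β * x / L| + 1 := by
  have hP : 0 < √(t / L) := hC.trans_le hCt
  refine le_of_mul_le_mul_right ?_ hP
  calc |√(t / L) - √k| * √(t / L)
      ≤ |√(t / L) - √k| * (√(t / L) + √k) := by gcongr; linarith [Real.sqrt_nonneg k]
    _ = |β * x / L * √(t / L) - (k - center L β x t)| := by
      rw [← abs_of_nonneg (show 0 ≤ √(t / L) + √k by positivity), ← abs_mul, center_eq hL ht]
      congr 1
      linear_combination -Real.sq_sqrt hk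
    _ ≤ |β * x / L * √(t / L)| + |k - center L β x t| := abs_sub _ _
    _ ≤ (|β * x / L| + 1) * √(t / L) := by rw [abs_mul, abs_of_pos hP]; linarith

lemma sqrt_mul_fillScore_sub (hL : 0 < L) (hβ : 0 < β) {n k : ℕ} (hk : 0 < k) :
    √k * (fillScore L β n k - x) =
      x * (√(log n / L) - √k) - (k - center L β x (log n)) * (L / β) := by
  have : 0 < √(k : ℝ) := Real.sqrt_pos.2 (mod_cast hk)
  have hlog : log n = √(log n / L) ^ 2 * L := by
    rw [Real.sq_sqrt (div_nonneg (log_natCast_nonneg n) hL.le), div_mul_cancel₀ _ hL.ne']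
  rw [center_eq hL (log_natCast_nonneg n), fillScore]
  nth_rewrite 1 [hlog]
  field_simp
  ring

lemma exists_abs_sqrt_mul_fillScore_sub_le (hL : 0 < L) (hβ : 0 < β) (x : ℝ) :
    ∃ R > 0, ∀ C > 0, ∀ᶠ n : ℕ in atTop, ∀ k : ℕ, |k - center L β x (log n)| ≤ C →
      |√k * (fillScore L β n k - x) + (k - center L β x (log n)) * (L / β)| ≤ R := by
  refine ⟨|x| * (|β * x / L| + 1) + 1, by positivity, fun C hC => ?_⟩
  filter_upwards [eventually_le_of_abs_sub_center_le hL β x C 1,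
    (tendsto_sqrt_log_div hL).eventually_ge_atTop C] with n hk hCn k hkC
  rw [sqrt_mul_fillScore_sub hL hβ (mod_cast hk k hkC : 1 ≤ k), sub_add_cancel, abs_mul]
  linarith [mul_le_mul_of_nonneg_left (abs_sqrt_sub_sqrt_le hL (log_natCast_nonneg n)
    k.cast_nonneg hC hCn hkC) (abs_nonneg x)]

lemma eventually_abs_fillScore_sub_le_one (hL : 0 < L) (hβ : 0 < β) (x : ℝ) {C : ℝ} (hC : 0 < C) :
    ∀ᶠ n : ℕ in atTop, ∀ k : ℕ, |k - center L β x (log n)| ≤ C →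
      |fillScore L β n k - x| ≤ 1 := by
  obtain ⟨R, hR, hscore⟩ := exists_abs_sqrt_mul_fillScore_sub_le hL hβ x
  have hLβ : 0 < L / β := div_pos hL hβ
  set Z := R + C * (L / β)
  have hZ0 : 0 < Z := by positivity
  filter_upwards [hscore C hC, eventually_le_of_abs_sub_center_le hL β x C (Z ^ 2)]
    with n hscore hkZ k hk
  have hZk : Z ≤ √k := Real.le_sqrt_of_sq_le (hkZ k hk)
  have hr : 0 < √(k : ℝ) := hZ0.trans_le hZk
  refine le_of_mul_le_mul_left ?_ hr
  calc √k * |fillScore L β n k - x|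
      = |√k * (fillScore L β n k - x) + (k - center L β x (log n)) * (L / β) -
          (k - center L β x (log n)) * (L / β)| := by
        rw [add_sub_cancel_right, abs_mul, abs_of_pos hr]
    _ ≤ R + C * (L / β) := by
        refine (abs_sub _ _).trans (add_le_add (hscore k hk) ?_)
        rw [abs_mul, abs_of_pos hLβ]
        gcongr
    _ ≤ √k * 1 := by rwa [mul_one]

/-- The sequence `a` crosses the level `α` within distance `C` of `K`, where it decreases at least
by `c / (k + 1)` in step `k`. -/
structure CrossesNear (a : ℕ → ℝ) (α K C c : ℝ) : Prop where
  le_sub_succ (k : ℕ) (hk : |k - K| ≤ C + 2) : c / (k + 1) ≤ a k - a (k + 1)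
  le_of_le (k : ℕ) (hk : |k - K| ≤ C + 2) (hkK : k ≤ K - C) : α ≤ a k
  lt_of_ge (k : ℕ) (hk : |k - K| ≤ C + 2) (hkK : K + C ≤ k) : a k < α

lemma exists_crossesNear_center_of_eq_zero (hL : 0 < L) (hα : 0 < α) (hα1 : α < 1) (x : ℝ) :
    ∃ C > 0, ∃ c > 0, ∀ᶠ n : ℕ in atTop,
      CrossesNear (fillMean L 0 n) α (center L 0 x (log n)) C c := by
  obtain ⟨C, hC, hCα⟩ : ∃ C > 0, 3 * exp (-(C * L)) < min α (1 - α) := by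
    have hlim : Tendsto (fun C : ℝ => 3 * exp (-(C * L))) atTop (nhds (3 * 0)) :=
      (tendsto_exp_neg_atTop_nhds_zero.comp (tendsto_id.atTop_mul_const hL)).const_mul 3
    rw [mul_zero] at hlim
    exact ((eventually_gt_atTop 0).and
      (hlim.eventually_lt_const (lt_min hα (sub_pos.2 hα1)))).exists
  obtain ⟨hCα0, hCα1⟩ := lt_min_iff.1 hCα
  obtain ⟨c, hc, hdrop⟩ := exists_le_fillDrop le_rfl hL ((C + 2) * L)
  refine ⟨C, hC, c, hc, ?_⟩
  filter_upwards [hdrop, eventually_ge_atTop 2] with n hdrop hn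
  have hcenter : center L 0 x (log n) = log n / L := by simp [center]
  have hmean (k : ℕ) : fillMean L 0 n k = fillCurve n ((log n / L - k) * L) := by
    simp [fillMean, sub_mul, hL.ne']
  have hstep (k : ℕ) := (isSmoothedStep_fillCurve hn).abs_sub_step_le ((log n / L - k) * L)
  rw [hcenter]
  refine ⟨fun k hk => ?_, fun k _ hkK => ?_, fun k _ hkK => ?_⟩
  · rw [fillMean_sub_fillMean_succ]
    have hdropk : c ≤ fillDrop L 0 n (log n - k * L) := by
      refine hdrop _ ?_
      rw [show log n - k * L = -((k - log n / L) * L) by field_simp; ring, abs_neg, abs_mul,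
        abs_of_pos hL]
      gcongr
    simpa using (div_le_self hc.le (by simp)).trans hdropk
  · have hu : C * L ≤ (log n / L - k) * L := by gcongr; linarith
    have hu0 : 0 ≤ (log n / L - k) * L := hu.trans' (by positivity)
    have hk := hstep k
    rw [if_pos hu0, abs_of_nonneg hu0, ← hmean] at hk
    linarith [(abs_le.1 hk).1, exp_le_exp.2 (neg_le_neg hu)]
  · have hu : C * L ≤ -((log n / L - k) * L) := by rw [← neg_mul]; gcongr; linarith
    have hu0 : (log n / L - k) * L < 0 := by linarith [mul_pos hC hL]
    have hk := hstep k
    rw [if_neg hu0.not_ge, abs_of_neg hu0, ← hmean] at hk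
    linarith [(abs_le.1 hk).2, exp_le_exp.2 (neg_le_neg hu)]

lemma cdf_gaussianReal_add_div_le {a b Y E r : ℝ} (ha : -Y ≤ a) (hb : b ≤ Y) (hE : 0 ≤ E)
    (hr : 0 < r) (hab : E / ((√(2 * π))⁻¹ * exp (-(Y ^ 2 / 2))) ≤ r * (b - a)) :
    cdf (gaussianReal 0 1) a + E / r ≤ cdf (gaussianReal 0 1) b := by
  have hφ : 0 < (√(2 * π))⁻¹ * exp (-(Y ^ 2 / 2)) := by positivity
  have hle : a ≤ b :=
    sub_nonneg.1 (nonneg_of_mul_nonneg_right ((div_nonneg hE hφ.le).trans hab) hr)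
  have hgap : E / r ≤ (√(2 * π))⁻¹ * exp (-(Y ^ 2 / 2)) * (b - a) := by
    rw [div_le_iff₀ hφ] at hab
    rw [div_le_iff₀ hr]
    linarith
  linarith [mul_le_cdf_gaussianReal_sub hle ha hb]

lemma cdf_lt_fillMean (hβ : 0 < β) {n k : ℕ} (hn : 2 ≤ n) (hk : 0 < k)
    (hclose : |fillScore L β n k - x| ≤ 1)
    (hgap : (29 + 6 / β) / ((√(2 * π))⁻¹ * exp (-((|x| + 1) ^ 2 / 2))) ≤
      √k * (fillScore L β n k - x)) :
    cdf (gaussianReal 0 1) x < fillMean L β n k := by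
  have hr : 0 < √(k : ℝ) := Real.sqrt_pos.2 (mod_cast hk)
  have hcdf := cdf_gaussianReal_add_div_le (by linarith [neg_abs_le x])
    (by linarith [(abs_le.1 hclose).2, le_abs_self x]) (by positivity) hr hgap
  have herr : (28 + 6 / β) / √k < (29 + 6 / β) / √k := by gcongr; norm_num
  linarith [(abs_le.1 (abs_fillMean_sub_cdf_le (L := L) hβ hn hk)).1]

lemma fillMean_lt_cdf (hβ : 0 < β) {n k : ℕ} (hn : 2 ≤ n) (hk : 0 < k)
    (hclose : |fillScore L β n k - x| ≤ 1)
    (hgap : (29 + 6 / β) / ((√(2 * π))⁻¹ * exp (-((|x| + 1) ^ 2 / 2))) ≤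
      √k * (x - fillScore L β n k)) :
    fillMean L β n k < cdf (gaussianReal 0 1) x := by
  have hr : 0 < √(k : ℝ) := Real.sqrt_pos.2 (mod_cast hk)
  have hcdf := cdf_gaussianReal_add_div_le
    (by linarith [(abs_le.1 hclose).1, neg_abs_le x]) (by linarith [le_abs_self x])
    (by positivity) hr hgap
  have herr : (28 + 6 / β) / √k < (29 + 6 / β) / √k := by gcongr; norm_num
  linarith [(abs_le.1 (abs_fillMean_sub_cdf_le (L := L) hβ hn hk)).2]

lemma exists_crossesNear_center_of_pos (hβ : 0 < β) (hβL : β < L)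
    (hx : cdf (gaussianReal 0 1) x = α) :
    ∃ C > 0, ∃ c > 0, ∀ᶠ n : ℕ in atTop,
      CrossesNear (fillMean L β n) α (center L β x (log n)) C c := by
  subst hx
  have hL : 0 < L := hβ.trans hβL
  obtain ⟨R, hR, hscore⟩ := exists_abs_sqrt_mul_fillScore_sub_le hL hβ x
  obtain ⟨c, hc, k₀, hdrop⟩ := exists_div_sqrt_le_fillMean_sub hβ hβL (|x| + 1)
  set G := (29 + 6 / β) / ((√(2 * π))⁻¹ * exp (-((|x| + 1) ^ 2 / 2)))
  set C := (G + R) * (β / L) with hC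
  have hC0 : 0 < C := by positivity
  have hCG : C * (L / β) = G + R := by rw [hC]; field_simp
  refine ⟨C, hC0, c, hc, ?_⟩
  filter_upwards [hdrop, hscore (C + 2) (by positivity),
    eventually_abs_fillScore_sub_le_one hL hβ x (show 0 < C + 2 by positivity),
    eventually_le_of_abs_sub_center_le hL β x (C + 2) (k₀ + 1), eventually_ge_atTop 2]
    with n hdrop hscore hclose hlarge hn
  have hk₀ (k : ℕ) (hk : |k - center L β x (log n)| ≤ C + 2) : k₀ < k := mod_cast hlarge k hk
  refine ⟨fun k hk => ?_, fun k hk hkK => (cdf_lt_fillMean hβ hn (hk₀ k hk).pos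
    (hclose k hk) ?_).le, fun k hk hkK => fillMean_lt_cdf hβ hn (hk₀ k hk).pos (hclose k hk) ?_⟩
  · have hY : |fillScore L β n k| ≤ |x| + 1 := by
      linarith [abs_sub_abs_le_abs_sub (fillScore L β n k) x, hclose k hk]
    have hr : 1 ≤ √(k : ℝ) := Real.one_le_sqrt.2 (mod_cast (hk₀ k hk).pos)
    refine (hdrop k (hk₀ k hk).le hY).trans' ?_
    gcongr
    nlinarith [Real.sq_sqrt (Nat.cast_nonneg (α := ℝ) k)]
  · have : C * (L / β) ≤ (center L β x (log n) - k) * (L / β) := by gcongr; linarith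
    linarith [(abs_le.1 (hscore k hk)).1]
  · have : C * (L / β) ≤ (k - center L β x (log n)) * (L / β) := by gcongr; linarith
    linarith [(abs_le.1 (hscore k hk)).2]

lemma exists_two_step_crossing {a : ℕ → ℝ} {c : ℝ} {i j : ℕ} (hij : i + 1 ≤ j)
    (hi : α ≤ a (i + 1)) (hj : a j < α) (hc : 0 < c)
    (hdrop : ∀ k : ℕ, i ≤ k → k ≤ j → c / (k + 1) ≤ a k - a (k + 1)) :
    ∃ k : ℕ, i ≤ k ∧ k < j ∧
      α + c / 4 / (k + 1) ≤ a k ∧ a (k + 2) ≤ α - c / 4 / (k + 1) := by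
  obtain ⟨m, him, hmj, hm, hm1⟩ : ∃ m, i + 1 ≤ m ∧ m < j ∧ α ≤ a m ∧ a (m + 1) < α := by
    by_contra! hstay
    exact hj.not_ge <| Nat.le_induction (P := fun m _ => m ≤ j → α ≤ a m) (fun _ => hi)
      (fun m him ih hmj => hstay m him hmj (ih (Nat.le_of_succ_le hmj))) j hij le_rfl
  have hhalf (k : ℕ) : c / (k + 1) / 2 ≤ c / ((k + 1 : ℕ) + 1) := by
    rw [div_div]
    gcongr
    push_cast
    linarith [(k.cast_nonneg : (0 : ℝ) ≤ k)]
  have hpos (k : ℕ) : 0 < c / 4 / ((k : ℝ) + 1) := by positivity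
  have hquarter (k : ℕ) : c / (k + 1) = 4 * (c / 4 / ((k : ℝ) + 1)) := by ring
  by_cases hcase : α + c / 4 / (m + 1) ≤ a m
  · refine ⟨m, by omega, hmj, hcase, ?_⟩
    linarith [hdrop (m + 1) (by omega) hmj, hhalf m, hquarter m, hpos m]
  · obtain ⟨k, rfl⟩ : ∃ k, m = k + 1 := ⟨m - 1, by omega⟩
    refine ⟨k, by omega, by omega, ?_, ?_⟩
    · linarith [hdrop k (by omega) (by omega), hquarter k, hpos k]
    · linarith [hdrop (k + 1) (by omega) hmj.le, hhalf k, hquarter (k + 1), hquarter k]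

lemma CrossesNear.exists_crossing {a : ℕ → ℝ} {K C c : ℝ} (h : CrossesNear a α K C c)
    (hC : 0 < C) (hc : 0 < c) (hCK : C + 2 ≤ K) :
    ∃ k : ℕ, |k - K| ≤ C + 2 ∧ α + c / 4 / (k + 1) ≤ a k ∧ a (k + 2) ≤ α - c / 4 / (k + 1) := by
  obtain ⟨i, hi⟩ : ∃ i, ⌊K - C⌋₊ = i + 1 :=
    Nat.exists_eq_add_one.2 (Nat.floor_pos.2 (by linarith))
  have hi0 : (i : ℝ) + 1 ≤ K - C := by
    exact_mod_cast hi ▸ Nat.floor_le (show 0 ≤ K - C by linarith)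
  have hi1 : K - C < i + 1 + 1 := by exact_mod_cast hi ▸ Nat.lt_floor_add_one (K - C)
  have hj0 := Nat.le_ceil (K + C)
  have hj1 := Nat.ceil_lt_add_one (show 0 ≤ K + C by linarith)
  have hwindow {k : ℕ} (hik : i ≤ k) (hkj : k ≤ ⌈K + C⌉₊) : |k - K| ≤ C + 2 := by
    have hik : (i : ℝ) ≤ k := mod_cast hik
    have hkj : (k : ℝ) ≤ ⌈K + C⌉₊ := mod_cast hkj
    exact abs_le.2 ⟨by linarith, by linarith⟩
  have hij : i + 1 ≤ ⌈K + C⌉₊ := by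
    have : ((i + 1 : ℕ) : ℝ) ≤ ⌈K + C⌉₊ := by push_cast; linarith
    exact_mod_cast this
  obtain ⟨k, hik, hkj, hk⟩ := exists_two_step_crossing hij
    (h.le_of_le (i + 1) (hwindow (by omega) hij) (by exact_mod_cast hi0))
    (h.lt_of_ge _ (hwindow (by omega) le_rfl) hj0) hc
    fun k hik hkj => h.le_sub_succ k (hwindow hik hkj)
  exact ⟨k, hwindow hik hkj.le, hk⟩

lemma exists_fillMean_two_step_crossing (hL : 0 < L) (hβ : 0 ≤ β) (hβL : β < L) (hα : 0 < α)
    (hα1 : α < 1) (hx : cdf (gaussianReal 0 1) x = α) :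
    ∃ C > 0, ∃ c > 0, ∀ᶠ n : ℕ in atTop, ∃ k : ℕ, |k - center L β x (log n)| ≤ C ∧
      α + c / (k + 1) ≤ fillMean L β n k ∧ fillMean L β n (k + 2) ≤ α - c / (k + 1) := by
  obtain ⟨C, hC, c, hc, hcross⟩ : ∃ C > 0, ∃ c > 0, ∀ᶠ n : ℕ in atTop,
      CrossesNear (fillMean L β n) α (center L β x (log n)) C c := by
    rcases hβ.eq_or_lt with rfl | hβ
    · exact exists_crossesNear_center_of_eq_zero hL hα hα1 x
    · exact exists_crossesNear_center_of_pos hβ hβL hx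
  refine ⟨C + 2, by positivity, c / 4, by positivity, ?_⟩
  filter_upwards [hcross, (tendsto_center hL β x).eventually_ge_atTop (C + 2)] with n hcross hn
  exact hcross.exists_crossing hC hc hn

end Crossing

/-! ### Occupancy counts of independent random letters -/

section Occupancy

lemma measurableSet_le_apply {V : Type*} (r : V) (a : ℕ) :
    MeasurableSet {f : V → ℕ | a ≤ f r} :=
  measurableSet_le measurable_const (measurable_pi_apply r)

variable {Ω V : Type*} [DecidableEq V]

/-- The number of occurrences of the letter `r` among the first `n` random letters. -/
def hits (Y : ℕ → Ω → V) (n : ℕ) (ω : Ω) (r : V) : ℕ :=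
  ((Finset.range n).filter fun i => Y i ω = r).card

lemma hits_succ (Y : ℕ → Ω → V) (n : ℕ) (ω : Ω) (r : V) :
    hits Y (n + 1) ω r = hits Y n ω r + if Y n ω = r then 1 else 0 := by
  rw [hits, Finset.range_add_one, Finset.filter_insert]
  split_ifs <;> simp [hits]

variable [MeasurableSpace Ω] {μ : Measure Ω} [MeasurableSpace V] [MeasurableSingletonClass V]
  {Y : ℕ → Ω → V}

lemma measurable_hits (hY : ∀ i, Measurable (Y i)) (n : ℕ) (r : V) :
    Measurable fun ω => hits Y n ω r := by
  simp only [hits, Finset.card_filter]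
  exact Finset.measurable_fun_sum _ fun i _ =>
    Measurable.ite (hY i (measurableSet_singleton r)) measurable_const measurable_const

lemma indepFun_hits (hind : iIndepFun Y μ) (hY : ∀ i, Measurable (Y i)) (n : ℕ) :
    IndepFun (Y n) (hits Y n) μ := by
  have hcount : Measurable fun (w : Finset.range n → V) (r : V) =>
      ∑ i, if w i = r then 1 else 0 :=
    measurable_pi_lambda _ fun r => Finset.measurable_fun_sum _ fun i _ =>
      Measurable.ite ((measurableSet_singleton r).preimage (measurable_pi_apply i))
        measurable_const measurable_const
  have hhits : hits Y n = (fun (w : Finset.range n → V) (r : V) =>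
      ∑ i, if w i = r then 1 else 0) ∘ fun ω i => Y i ω := by
    funext ω r
    simp only [hits, Finset.card_filter, Function.comp]
    exact (Finset.sum_coe_sort (Finset.range n) fun i => if Y i ω = r then 1 else 0).symm
  rw [hhits]
  exact (hind.indepFun_finset {n} (Finset.range n) (by simp) hY).comp
    (measurable_pi_apply ⟨n, Finset.mem_singleton_self n⟩) hcount

lemma measureReal_inter_hits (hind : iIndepFun Y μ) (hY : ∀ i, Measurable (Y i)) (n : ℕ)
    {A : Set V} {P : (V → ℕ) → Prop} (hA : MeasurableSet A) (hP : MeasurableSet {f | P f}) :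
    μ.real (Y n ⁻¹' A ∩ {ω | P (hits Y n ω)}) =
      μ.real (Y n ⁻¹' A) * μ.real {ω | P (hits Y n ω)} :=
  (congrArg ENNReal.toReal ((indepFun_hits hind hY n).measure_inter_preimage_eq_mul A {f | P f}
    hA hP)).trans ENNReal.toReal_mul

variable [IsProbabilityMeasure μ]

lemma measureReal_succ_le_hits_succ (hind : iIndepFun Y μ) (hY : ∀ i, Measurable (Y i))
    (n a : ℕ) (r : V) :
    μ.real {ω | a + 1 ≤ hits Y (n + 1) ω r} =
      μ.real (Y n ⁻¹' {r}) * μ.real {ω | a ≤ hits Y n ω r} +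
        (1 - μ.real (Y n ⁻¹' {r})) * μ.real {ω | a + 1 ≤ hits Y n ω r} := by
  have hr : MeasurableSet ({r} : Set V) := measurableSet_singleton r
  have hhit := measureReal_inter_hits hind hY n hr (measurableSet_le_apply r a)
  have hmiss := measureReal_inter_hits hind hY n hr.compl (measurableSet_le_apply r (a + 1))
  rw [Set.preimage_compl, probReal_compl_eq_one_sub (hY n hr)] at hmiss
  rw [← measureReal_inter_add_sdiff (hY n hr)]
  convert congrArg₂ (· + ·) hhit hmiss using 3
  · ext ω
    by_cases h : Y n ω = r <;> simp [h, hits_succ]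
  · ext ω
    by_cases h : Y n ω = r <;> simp [h, hits_succ]

lemma measureReal_succ_le_hits_succ_pair (hind : iIndepFun Y μ) (hY : ∀ i, Measurable (Y i))
    (n a b : ℕ) {r s : V} (hrs : r ≠ s) :
    μ.real {ω | a + 1 ≤ hits Y (n + 1) ω r ∧ b + 1 ≤ hits Y (n + 1) ω s} =
      μ.real (Y n ⁻¹' {r}) * μ.real {ω | a ≤ hits Y n ω r ∧ b + 1 ≤ hits Y n ω s} +
      μ.real (Y n ⁻¹' {s}) * μ.real {ω | a + 1 ≤ hits Y n ω r ∧ b ≤ hits Y n ω s} +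
      (1 - μ.real (Y n ⁻¹' {r}) - μ.real (Y n ⁻¹' {s})) *
        μ.real {ω | a + 1 ≤ hits Y n ω r ∧ b + 1 ≤ hits Y n ω s} := by
  have hr : MeasurableSet ({r} : Set V) := measurableSet_singleton r
  have hs : MeasurableSet ({s} : Set V) := measurableSet_singleton s
  have hB (a b : ℕ) : MeasurableSet {f : V → ℕ | a ≤ f r ∧ b ≤ f s} :=
    (measurableSet_le_apply r a).inter (measurableSet_le_apply s b)
  have hrhit := measureReal_inter_hits hind hY n hr (hB a (b + 1))
  have hshit := measureReal_inter_hits hind hY n hs (hB (a + 1) b)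
  have hmiss := measureReal_inter_hits hind hY n (hr.union hs).compl (hB (a + 1) (b + 1))
  rw [Set.preimage_compl, probReal_compl_eq_one_sub (hY n (hr.union hs)), Set.preimage_union,
    measureReal_union (Set.disjoint_singleton.2 hrs |>.preimage _) (hY n hs), ← sub_sub] at hmiss
  rw [← measureReal_inter_add_sdiff (hY n hr),
    ← measureReal_inter_add_sdiff (s := _ \ Y n ⁻¹' {r}) (hY n hs), ← add_assoc]
  convert congrArg₂ (· + ·) (congrArg₂ (· + ·) hrhit hshit) hmiss using 4
  all_goals
    ext ω
    by_cases h : Y n ω = r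
    · simp [h, hrs, hits_succ]
    · by_cases h' : Y n ω = s <;> simp [h, h', hrs.symm, hits_succ]

lemma measureReal_two_le_hits (hind : iIndepFun Y μ) (hY : ∀ i, Measurable (Y i)) {r : V} {x : ℝ}
    (hx : ∀ i, μ.real (Y i ⁻¹' {r}) = x) (n : ℕ) :
    μ.real {ω | 2 ≤ hits Y n ω r} = fillProb n x := by
  have hone (n : ℕ) : μ.real {ω | 1 ≤ hits Y n ω r} = 1 - (1 - x) ^ n := by
    induction n with
    | zero => simp [hits]
    | succ n ih =>
      rw [measureReal_succ_le_hits_succ hind hY n 0 r, hx, ih]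
      simp only [zero_le, Set.ofPred_true, probReal_univ]
      ring
  induction n with
  | zero => simp [hits, fillProb]
  | succ n ih =>
    rw [measureReal_succ_le_hits_succ hind hY n 1 r, hx, ih, hone]
    rcases n with _ | n
    · simp [fillProb]
    · simp only [fillProb, Nat.add_sub_cancel]
      push_cast
      ring

lemma measureReal_le_hits_inter_le (hind : iIndepFun Y μ) (hY : ∀ i, Measurable (Y i)) (n : ℕ)
    {r s : V} (hrs : r ≠ s) (a b : ℕ) :
    μ.real {ω | a ≤ hits Y n ω r ∧ b ≤ hits Y n ω s} ≤
      μ.real {ω | a ≤ hits Y n ω r} * μ.real {ω | b ≤ hits Y n ω s} := by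
  induction n generalizing a b with
  | zero => rcases a with _ | a <;> rcases b with _ | b <;> simp [hits]
  | succ n ih =>
    rcases a with _ | a
    · simp
    rcases b with _ | b
    · simp
    rw [measureReal_succ_le_hits_succ_pair hind hY n a b hrs,
      measureReal_succ_le_hits_succ hind hY n a r, measureReal_succ_le_hits_succ hind hY n b s]
    have hanti (r : V) (a : ℕ) :
        μ.real {ω | a + 1 ≤ hits Y n ω r} ≤ μ.real {ω | a ≤ hits Y n ω r} :=
      measureReal_mono fun ω hω => Nat.le_of_succ_le hω
    have hxy : μ.real (Y n ⁻¹' {r}) + μ.real (Y n ⁻¹' {s}) ≤ 1 := by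
      rw [← measureReal_union ((Set.disjoint_singleton.2 hrs).preimage _)
        (hY n (measurableSet_singleton s))]
      exact measureReal_le_one
    set x := μ.real (Y n ⁻¹' {r})
    set y := μ.real (Y n ⁻¹' {s})
    have hx : 0 ≤ x := measureReal_nonneg
    have hy : 0 ≤ y := measureReal_nonneg
    have hgap : 0 ≤ x * y * ((μ.real {ω | a ≤ hits Y n ω r} - μ.real {ω | a + 1 ≤ hits Y n ω r}) *
        (μ.real {ω | b ≤ hits Y n ω s} - μ.real {ω | b + 1 ≤ hits Y n ω s})) :=
      mul_nonneg (mul_nonneg hx hy)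
        (mul_nonneg (sub_nonneg.2 (hanti r a)) (sub_nonneg.2 (hanti s b)))
    linarith [mul_le_mul_of_nonneg_left (ih a (b + 1)) hx,
      mul_le_mul_of_nonneg_left (ih (a + 1) b) hy,
      mul_le_mul_of_nonneg_left (ih (a + 1) (b + 1)) (show 0 ≤ 1 - x - y by linarith)]

end Occupancy

section Variance

variable {Ω ι : Type*} [MeasurableSpace Ω] {μ : Measure Ω} [IsProbabilityMeasure μ] [Fintype ι]

lemma variance_sum_indicator_le {E : ι → Set Ω} (hE : ∀ i, MeasurableSet (E i))
    (hneg : ∀ i j, i ≠ j → μ.real (E i ∩ E j) ≤ μ.real (E i) * μ.real (E j)) :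
    variance (fun ω => ∑ i, (E i).indicator (fun _ => (1 : ℝ)) ω) μ ≤ Fintype.card ι / 4 := by
  classical
  have hmem (i : ι) : MemLp ((E i).indicator fun _ => (1 : ℝ)) 2 μ :=
    memLp_indicator_const 2 (hE i) 1 (Or.inr (measure_ne_top μ _))
  have hcov (i j : ι) : covariance ((E i).indicator fun _ => (1 : ℝ))
      ((E j).indicator fun _ => (1 : ℝ)) μ = μ.real (E i ∩ E j) - μ.real (E i) * μ.real (E j) := by
    have hmul : (E i).indicator (fun _ => (1 : ℝ)) * (E j).indicator (fun _ => 1) =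
        (E i ∩ E j).indicator fun _ => 1 := by
      funext ω
      by_cases hi : ω ∈ E i <;> by_cases hj : ω ∈ E j <;> simp [hi, hj]
    rw [covariance_eq_sub (hmem i) (hmem j), hmul]
    simp [integral_indicator_const, hE i, hE j, (hE i).inter (hE j)]
  rw [variance_fun_sum hmem]
  calc ∑ i, ∑ j, covariance ((E i).indicator fun _ => (1 : ℝ))
        ((E j).indicator fun _ => (1 : ℝ)) μ
      ≤ ∑ i : ι, ∑ j : ι, if i = j then (1 / 4 : ℝ) else 0 := by
        refine Finset.sum_le_sum fun i _ => Finset.sum_le_sum fun j _ => ?_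
        rw [hcov]
        split_ifs with hij
        · subst hij
          rw [Set.inter_self]
          linarith [sq_nonneg (μ.real (E i) - 1 / 2)]
        · linarith [hneg i j hij]
    _ = Fintype.card ι / 4 := by simp [div_eq_mul_inv]

end Variance

/-! ### Random strings -/

section RandomStrings

lemma iIndepFun_of_measure_forall_eq {Ω ι V : Type*} [MeasurableSpace Ω] {μ : Measure Ω}
    [IsProbabilityMeasure μ] [MeasurableSpace V] [MeasurableSingletonClass V] [Countable V]
    {Y : ι → Ω → V} (hY : ∀ i, Measurable (Y i))
    (h : ∀ (S : Finset ι) (w : ι → V),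
      μ {ω | ∀ i ∈ S, Y i ω = w i} = ∏ i ∈ S, μ (Y i ⁻¹' {w i})) :
    iIndepFun Y μ := by
  rw [iIndepFun_iff_finset]
  intro S
  refine (iIndepFun_iff_map_fun_eq_pi_map fun i : S => (hY i).aemeasurable).2
    (Measure.ext_of_singleton fun w => ?_)
  obtain ⟨ω₀⟩ := μ.nonempty_of_neZero
  have hext (i : S) : Function.extend (↑) w (fun i => Y i ω₀) (i : ι) = w i :=
    Subtype.val_injective.extend_apply w _ i
  have hcyl := h S (Function.extend (↑) w fun i => Y i ω₀)
  rw [← Finset.prod_coe_sort] at hcyl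
  simp only [hext] at hcyl
  have := fun i : S => Measure.isProbabilityMeasure_map (μ := μ) (hY i).aemeasurable
  rw [Measure.map_apply (measurable_pi_lambda _ fun i : S => hY i) (measurableSet_singleton w),
    Measure.pi_singleton]
  simp only [Measure.map_apply (hY _) (measurableSet_singleton _), ← hcyl]
  congr 1
  ext ω
  simp only [Set.mem_preimage, Set.mem_singleton_iff, funext_iff, Set.mem_ofPred_eq,
    Subtype.forall]
  exact forall₂_congr fun i hi => by rw [← hext ⟨i, hi⟩]

variable {k : ℕ}

/-- The first `k` bits of the `i`-th string. -/
def wordPrefix (k i : ℕ) (ω : ℕ → ℕ → Bool) : Fin k → Bool := fun j => ω i j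

/-- The probability that a random string starts with the word `r`. -/
noncomputable def wordProb (p : ℝ) (r : Fin k → Bool) : ℝ := ∏ j, if r j then p else 1 - p

lemma measurable_wordPrefix (k i : ℕ) : Measurable (wordPrefix k i) :=
  measurable_pi_lambda _ fun j => (measurable_pi_apply (j : ℕ)).comp (measurable_pi_apply i)

lemma prefCount_eq_hits (ω : ℕ → ℕ → Bool) (n k : ℕ) (r : Fin k → Bool) :
    prefCount ω n k r = hits (wordPrefix k) n ω r := by
  simp only [prefCount, hits, wordPrefix, funext_iff]

lemma fillCount_eq_sum_indicator (ω : ℕ → ℕ → Bool) (n k : ℕ) :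
    (fillCount ω n k : ℝ) =
      ∑ r, {ω | 2 ≤ hits (wordPrefix k) n ω r}.indicator (fun _ => (1 : ℝ)) ω := by
  simp [fillCount, prefCount_eq_hits, Set.indicator_apply]

lemma measurableSet_two_le_hits_wordPrefix (n : ℕ) (r : Fin k → Bool) :
    MeasurableSet {ω | 2 ≤ hits (wordPrefix k) n ω r} :=
  measurableSet_le measurable_const (measurable_hits (measurable_wordPrefix k) n r)

lemma memLp_fracFilled (ν : Measure (ℕ → ℕ → Bool)) [IsFiniteMeasure ν] (n k : ℕ) :
    MemLp (fun ω => fracFilled ω n k) 2 ν := by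
  have hcount : MemLp (fun ω => ∑ r : Fin k → Bool,
      {ω | 2 ≤ hits (wordPrefix k) n ω r}.indicator (fun _ => (1 : ℝ)) ω) 2 ν :=
    memLp_finsetSum _ fun r _ => memLp_indicator_const 2
      (measurableSet_two_le_hits_wordPrefix n r) 1 (Or.inr (measure_ne_top ν _))
  simpa only [fracFilled, fillCount_eq_sum_indicator, div_eq_inv_mul] using
    hcount.const_mul ((2 : ℝ) ^ k)⁻¹

section Law

variable {p : ℝ}

lemma wordProb_nonneg (hp0 : 0 ≤ p) (hp1 : p ≤ 1) (r : Fin k → Bool) : 0 ≤ wordProb p r :=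
  Finset.prod_nonneg fun j _ => by split_ifs <;> linarith

lemma wordProb_le_one (hp0 : 0 ≤ p) (hp1 : p ≤ 1) (r : Fin k → Bool) : wordProb p r ≤ 1 :=
  Finset.prod_le_one (fun j _ => by split_ifs <;> linarith)
    fun j _ => by split_ifs <;> linarith

lemma wordProb_eq_exp {L b : ℝ} (hp : p = exp (-L + b)) (hq : 1 - p = exp (-L - b))
    (r : Fin k → Bool) : wordProb p r = exp (-(k * L) + b * signSum r) := by
  have hexponent : -(k * L) + b * signSum r = ∑ j, (-L + b * if r j then 1 else -1) := by
    simp [signSum, Finset.sum_add_distrib, Finset.mul_sum]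
  rw [wordProb, hexponent, exp_sum]
  refine Finset.prod_congr rfl fun j _ => ?_
  split_ifs
  · rw [hp, mul_one]
  · rw [hq, mul_neg_one, sub_eq_add_neg]

lemma expect_fillProb_wordProb {L b : ℝ} (hp : p = exp (-L + b)) (hq : 1 - p = exp (-L - b))
    {n : ℕ} (hn : 0 < n) : 𝔼 r : Fin k → Bool, fillProb n (wordProb p r) = fillMean L |b| n k := by
  have hp0 : 0 ≤ p := hp ▸ (exp_pos _).le
  have hp1 : p ≤ 1 := sub_nonneg.1 (hq ▸ (exp_pos _).le)
  have hword (r : Fin k → Bool) :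
      fillProb n (wordProb p r) = fillCurve n (log n - k * L + b * signSum r) := by
    have hexp : exp (log n - k * L + b * signSum r) / n = wordProb p r := by
      rw [wordProb_eq_exp hp hq, sub_eq_add_neg, add_assoc, exp_add,
        exp_log (Nat.cast_pos.2 hn), mul_div_cancel_left₀ _ (by positivity)]
    rw [fillCurve, hexp, min_eq_left (wordProb_le_one hp0 hp1 r)]
  simp only [hword, fillMean]
  rcases abs_choice b with hb | hb
  · rw [hb]
  · rw [hb, ← expect_signSum_neg fun s => fillCurve n (log n - k * L + -b * s)]
    simp only [neg_mul_neg]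

end Law

namespace IIDBits

variable {p : ℝ} {ν : Measure (ℕ → ℕ → Bool)}

lemma measure_forall_wordPrefix_eq (hν : IIDBits p ν) (hp0 : 0 ≤ p) (hp1 : p ≤ 1)
    (S : Finset ℕ) (w : ℕ → Fin k → Bool) :
    ν {ω | ∀ i ∈ S, wordPrefix k i ω = w i} = ∏ i ∈ S, ENNReal.ofReal (wordProb p (w i)) := by
  let b (s : ℕ × ℕ) : Bool := if h : s.2 < k then w s.1 ⟨s.2, h⟩ else false
  have hb (i : ℕ) (j : Fin k) : b (i, j) = w i j := dif_pos j.2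
  have hcyl : {ω | ∀ i ∈ S, wordPrefix k i ω = w i} =
      {ω | ∀ s ∈ S ×ˢ Finset.range k, ω s.1 s.2 = b s} := by
    ext ω
    simp only [Set.mem_ofPred_eq, Finset.mem_product, Finset.mem_range, Prod.forall, and_imp,
      funext_iff, wordPrefix, ← hb]
    exact forall_congr' fun i => ⟨fun h j hi hj => h hi ⟨j, hj⟩, fun h hi j => h j hi j.2⟩
  rw [hcyl, hν.2, Finset.prod_product]
  refine Finset.prod_congr rfl fun i _ => ?_
  rw [wordProb, ENNReal.ofReal_prod_of_nonneg fun j _ => by split_ifs <;> linarith,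
    Finset.prod_range]
  simp only [hb]

lemma measure_wordPrefix_preimage (hν : IIDBits p ν) (hp0 : 0 ≤ p) (hp1 : p ≤ 1) (i : ℕ)
    (r : Fin k → Bool) : ν (wordPrefix k i ⁻¹' {r}) = ENNReal.ofReal (wordProb p r) := by
  have hcyl := hν.measure_forall_wordPrefix_eq hp0 hp1 {i} fun _ => r
  simp only [Finset.mem_singleton, forall_eq, Finset.prod_singleton] at hcyl
  exact hcyl

lemma measureReal_wordPrefix_preimage (hν : IIDBits p ν) (hp0 : 0 ≤ p) (hp1 : p ≤ 1) (i : ℕ)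
    (r : Fin k → Bool) : ν.real (wordPrefix k i ⁻¹' {r}) = wordProb p r := by
  rw [measureReal_def, hν.measure_wordPrefix_preimage hp0 hp1,
    ENNReal.toReal_ofReal (wordProb_nonneg hp0 hp1 r)]

lemma iIndepFun_wordPrefix (hν : IIDBits p ν) (hp0 : 0 ≤ p) (hp1 : p ≤ 1) (k : ℕ) :
    iIndepFun (wordPrefix k) ν := by
  have := hν.1
  refine iIndepFun_of_measure_forall_eq (measurable_wordPrefix k) fun S w => ?_
  simp only [hν.measure_wordPrefix_preimage hp0 hp1]
  exact hν.measure_forall_wordPrefix_eq hp0 hp1 S w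

lemma integral_fracFilled (hν : IIDBits p ν) (hp0 : 0 ≤ p) (hp1 : p ≤ 1) (n k : ℕ) :
    ∫ ω, fracFilled ω n k ∂ν = 𝔼 r : Fin k → Bool, fillProb n (wordProb p r) := by
  have := hν.1
  simp only [fracFilled, fillCount_eq_sum_indicator]
  rw [integral_div, integral_finsetSum _ fun r _ =>
    (integrable_const 1).indicator (measurableSet_two_le_hits_wordPrefix n r),
    Fintype.expect_eq_sum_div_card]
  congr 1
  · refine Finset.sum_congr rfl fun r _ => ?_
    rw [integral_indicator_const 1 (measurableSet_two_le_hits_wordPrefix n r), smul_eq_mul, mul_one]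
    exact measureReal_two_le_hits (hν.iIndepFun_wordPrefix hp0 hp1 k) (measurable_wordPrefix k)
      (fun i => hν.measureReal_wordPrefix_preimage hp0 hp1 i r) n
  · simp

lemma variance_fracFilled_le (hν : IIDBits p ν) (hp0 : 0 ≤ p) (hp1 : p ≤ 1) (n k : ℕ) :
    variance (fun ω => fracFilled ω n k) ν ≤ 1 / (4 * 2 ^ k) := by
  have := hν.1
  have hcount := variance_sum_indicator_le (μ := ν)
    (E := fun r => {ω | 2 ≤ hits (wordPrefix k) n ω r}) (measurableSet_two_le_hits_wordPrefix n)
    fun r s hrs => measureReal_le_hits_inter_le (hν.iIndepFun_wordPrefix hp0 hp1 k)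
      (measurable_wordPrefix k) n hrs 2 2
  simp only [← fillCount_eq_sum_indicator, Fintype.card_pi, Fintype.card_bool, Finset.prod_const,
    Finset.card_univ, Fintype.card_fin] at hcount
  push_cast at hcount
  simp only [fracFilled, div_eq_inv_mul, variance_const_mul]
  calc ((2 : ℝ) ^ k)⁻¹ ^ 2 * variance (fun ω => (fillCount ω n k : ℝ)) ν
      ≤ ((2 : ℝ) ^ k)⁻¹ ^ 2 * (2 ^ k / 4) := by gcongr
    _ = (4 * 2 ^ k)⁻¹ * 1 := by field_simp

lemma measure_le_abs_fracFilled_sub_le (hν : IIDBits p ν) {L b : ℝ} (hp : p = exp (-L + b))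
    (hq : 1 - p = exp (-L - b)) {n : ℕ} (hn : 0 < n) (k : ℕ) {δ : ℝ} (hδ : 0 < δ) :
    ν {ω | δ ≤ |fracFilled ω n k - fillMean L |b| n k|} ≤
      ENNReal.ofReal (1 / (4 * 2 ^ k * δ ^ 2)) := by
  have := hν.1
  have hp0 : 0 ≤ p := hp ▸ (exp_pos _).le
  have hp1 : p ≤ 1 := sub_nonneg.1 (hq ▸ (exp_pos _).le)
  rw [← expect_fillProb_wordProb hp hq hn, ← hν.integral_fracFilled hp0 hp1]
  refine (meas_ge_le_variance_div_sq (memLp_fracFilled ν n k) hδ).trans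
    (ENNReal.ofReal_le_ofReal ?_)
  rw [← div_div]
  gcongr
  exact hν.variance_fracFilled_le hp0 hp1 n k

end IIDBits

end RandomStrings

/-! ### The fillup level -/

section FillupLevel

lemma fillCount_le (ω : ℕ → ℕ → Bool) (n k : ℕ) : fillCount ω n k ≤ n := by
  have hsub : (Finset.univ.filter fun r : Fin k → Bool => 2 ≤ prefCount ω n k r) ⊆
      (Finset.range n).image fun i => wordPrefix k i ω := by
    intro r hr
    obtain ⟨i, hi⟩ := Finset.card_pos.1 (zero_lt_two.trans_le (Finset.mem_filter.1 hr).2)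
    rw [Finset.mem_filter] at hi
    exact Finset.mem_image.2 ⟨i, hi.1, funext hi.2⟩
  simpa [fillCount] using (Finset.card_le_card hsub).trans Finset.card_image_le

lemma fillCount_succ_le (ω : ℕ → ℕ → Bool) (n k : ℕ) :
    fillCount ω n (k + 1) ≤ 2 * fillCount ω n k := by
  have hmaps : ∀ r ∈ Finset.univ.filter fun r : Fin (k + 1) → Bool => 2 ≤ prefCount ω n (k + 1) r,
      (r (Fin.last k), Fin.init r) ∈ Finset.univ ×ˢ
        Finset.univ.filter fun r : Fin k → Bool => 2 ≤ prefCount ω n k r := by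
    intro r hr
    simp only [Finset.mem_product, Finset.mem_filter, Finset.mem_univ, true_and] at hr ⊢
    exact hr.trans (Finset.card_le_card (Finset.monotone_filter_right _
      fun i _ hi j => hi j.castSucc))
  have hinj : Function.Injective fun r : Fin (k + 1) → Bool => (r (Fin.last k), Fin.init r) :=
    (Fin.snocEquiv fun _ => Bool).symm.injective
  simpa [fillCount] using Finset.card_le_card_of_injOn _ hmaps hinj.injOn

lemma fracFilled_antitone (ω : ℕ → ℕ → Bool) (n : ℕ) : Antitone (fracFilled ω n) := by
  refine antitone_nat_of_succ_le fun k => ?_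
  have hsucc : (fillCount ω n (k + 1) : ℝ) ≤ 2 * fillCount ω n k := mod_cast fillCount_succ_le ω n k
  calc fracFilled ω n (k + 1) ≤ 2 * fillCount ω n k / 2 ^ (k + 1) := by
        rw [fracFilled]; gcongr
    _ = fracFilled ω n k := by rw [fracFilled, pow_succ']; field_simp

variable {α : ℝ}

lemma bddAbove_setOf_le_fracFilled (hα : 0 < α) (ω : ℕ → ℕ → Bool) (n : ℕ) :
    BddAbove {k | α ≤ fracFilled ω n k} := by
  refine ⟨⌈n / α⌉₊, fun k hk => Nat.cast_le.1 (le_trans ?_ (Nat.le_ceil (n / α)))⟩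
  have hk : α ≤ fillCount ω n k / 2 ^ k := hk
  have hpow : (k : ℝ) ≤ 2 ^ k := mod_cast (Nat.lt_two_pow_self (n := k)).le
  rw [le_div_iff₀ hα]
  calc k * α ≤ 2 ^ k * α := by gcongr
    _ ≤ fillCount ω n k := (le_div_iff₀' (by positivity)).1 hk
    _ ≤ n := mod_cast fillCount_le ω n k

lemma fillupLevel_eq_or_eq (hα : 0 < α) {ω : ℕ → ℕ → Bool} {n k : ℕ}
    (hk : α ≤ fracFilled ω n k) (hk2 : fracFilled ω n (k + 2) < α) :
    fillupLevel α ω n = k ∨ fillupLevel α ω n = k + 1 := by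
  have hbdd := bddAbove_setOf_le_fracFilled hα ω n
  have hle : k ≤ fillupLevel α ω n := le_csSup hbdd hk
  have hmem : α ≤ fracFilled ω n (fillupLevel α ω n) := Nat.sSup_mem ⟨k, hk⟩ hbdd
  have hlt : fillupLevel α ω n < k + 2 :=
    (fracFilled_antitone ω n).reflect_lt (hk2.trans_le hmem)
  omega

variable {p L b : ℝ} {ν : Measure (ℕ → ℕ → Bool)}

lemma one_sub_le_measure_fillupLevel (hν : IIDBits p ν) (hp : p = exp (-L + b))
    (hq : 1 - p = exp (-L - b)) (hα : 0 < α) {n k : ℕ} (hn : 0 < n) {δ : ℝ} (hδ : 0 < δ)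
    (hk : α + δ ≤ fillMean L |b| n k) (hk2 : fillMean L |b| n (k + 2) ≤ α - δ) :
    1 - ENNReal.ofReal (1 / (2 ^ k * δ ^ 2)) ≤
      ν {ω | fillupLevel α ω n = k ∨ fillupLevel α ω n = k + 1} := by
  have := hν.1
  let bad (m : ℕ) : Set (ℕ → ℕ → Bool) := {ω | δ ≤ |fracFilled ω n m - fillMean L |b| n m|}
  let good : Set (ℕ → ℕ → Bool) := {ω | fillupLevel α ω n = k ∨ fillupLevel α ω n = k + 1}
  have hcover : Set.univ ⊆ good ∪ (bad k ∪ bad (k + 2)) := by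
    intro ω _
    by_contra hω
    simp only [bad, Set.mem_union, Set.mem_ofPred_eq, not_or, not_le, abs_lt] at hω
    obtain ⟨hlevel, hdev, hdev2⟩ := hω
    exact hlevel (fillupLevel_eq_or_eq hα (by linarith [hdev.1]) (by linarith [hdev2.2]))
  have hbad (m : ℕ) (hkm : k ≤ m) : ν (bad m) ≤ ENNReal.ofReal (1 / (2 * (2 ^ k * δ ^ 2))) := by
    refine (hν.measure_le_abs_fracFilled_sub_le hp hq hn m hδ).trans
      (ENNReal.ofReal_le_ofReal ?_)
    rw [← mul_assoc]
    gcongr <;> norm_num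
  rw [tsub_le_iff_right]
  calc 1 = ν Set.univ := measure_univ.symm
    _ ≤ ν good + (ν (bad k) + ν (bad (k + 2))) :=
      (measure_mono hcover).trans
        ((measure_union_le _ _).trans (by gcongr; exact measure_union_le _ _))
    _ ≤ ν good + ENNReal.ofReal (1 / (2 ^ k * δ ^ 2)) := by
      gcongr
      refine (add_le_add (hbad k le_rfl) (hbad (k + 2) (by omega))).trans_eq ?_
      rw [← ENNReal.ofReal_add (by positivity) (by positivity)]
      congr 1
      field_simp
      norm_num

lemma tendsto_one_div_two_pow_mul_sq (c : ℝ) :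
    Tendsto (fun k : ℕ => 1 / (2 ^ k * (c / (k + 1)) ^ 2)) atTop (nhds 0) := by
  have hpow := ((tendsto_pow_const_div_const_pow_of_one_lt 2 (one_lt_two (α := ℝ))).comp
    (tendsto_add_atTop_nat 1)).const_mul (2 / c ^ 2)
  rw [mul_zero] at hpow
  refine hpow.congr fun k => ?_
  simp only [Function.comp, pow_succ (2 : ℝ) k]
  push_cast
  field_simp

lemma tendsto_measure_fillupLevel (hν : IIDBits p ν) (hp : p = exp (-L + b))
    (hq : 1 - p = exp (-L - b)) (hα : 0 < α) {c : ℝ} (hc : 0 < c) {kn : ℕ → ℕ}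
    (hkn : Tendsto kn atTop atTop)
    (hcross : ∀ᶠ n in atTop, α + c / (kn n + 1) ≤ fillMean L |b| n (kn n) ∧
      fillMean L |b| n (kn n + 2) ≤ α - c / (kn n + 1)) :
    Tendsto (fun n => ν {ω | fillupLevel α ω n = kn n ∨ fillupLevel α ω n = kn n + 1}) atTop
      (nhds 1) := by
  have := hν.1
  have herror := ENNReal.tendsto_ofReal ((tendsto_one_div_two_pow_mul_sq c).comp hkn)
  have hlower := ENNReal.Tendsto.sub (tendsto_const_nhds (x := (1 : ℝ≥0∞))) herror
    (Or.inl ENNReal.one_ne_top)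
  rw [ENNReal.ofReal_zero, tsub_zero] at hlower
  refine tendsto_of_tendsto_of_tendsto_of_le_of_le' hlower tendsto_const_nhds ?_
    (Eventually.of_forall fun n => prob_le_one)
  filter_upwards [hcross, eventually_gt_atTop 0] with n hcross hn
  exact one_sub_le_measure_fillupLevel hν hp hq hα hn (by positivity) hcross.1 hcross.2

end FillupLevel

/-! ### The parameters `L` and `β` -/

section Parameters

variable {p q : ℝ}

lemma log_one_div_sqrt_mul (hp : 0 < p) (hq : 0 < q) :
    log (1 / √(p * q)) = -(log p + log q) / 2 := by
  rw [one_div, log_inv, log_sqrt (by positivity), log_mul hp.ne' hq.ne', neg_div]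

lemma eq_exp_neg_log_add (hp : 0 < p) (hq : 0 < q) :
    p = exp (-log (1 / √(p * q)) + log (p / q) / 2) := by
  rw [log_one_div_sqrt_mul hp hq, log_div hp.ne' hq.ne']
  ring_nf
  rw [exp_log hp]

lemma eq_exp_neg_log_sub (hp : 0 < p) (hq : 0 < q) :
    q = exp (-log (1 / √(p * q)) - log (p / q) / 2) := by
  rw [log_one_div_sqrt_mul hp hq, log_div hp.ne' hq.ne']
  ring_nf
  rw [exp_log hq]

lemma abs_log_div_lt (hp : 0 < p) (hp1 : p < 1) (hq : 0 < q) (hq1 : q < 1) :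
    |log (p / q) / 2| < log (1 / √(p * q)) := by
  rw [log_one_div_sqrt_mul hp hq, log_div hp.ne' hq.ne', abs_lt]
  constructor <;> linarith [log_neg hp hp1, log_neg hq hq1]

end Parameters

theorem fillupLevel_two_point_concentration
    (p q α : ℝ) (hp : 0 < p) (hp1 : p < 1) (hq : q = 1 - p) (hα : 0 < α) (hα1 : α < 1)
    (ν : Measure (ℕ → ℕ → Bool)) (hν : IIDBits p ν)
    (xα : ℝ) (hxα : ProbabilityTheory.cdf (ProbabilityTheory.gaussianReal 0 1) xα = α) :
    ∃ C > (0 : ℝ), ∃ kn : ℕ → ℕ,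
      (∀ n : ℕ, 2 ≤ n →
        |(kn n : ℝ) -
            (Real.logb (1 / Real.sqrt (p * q)) n -
              |Real.log (p / q)| / (2 * Real.log (1 / Real.sqrt (p * q)) ^ ((3 : ℝ) / 2))
                * xα * Real.sqrt (Real.log n))| ≤ C) ∧
      Tendsto
        (fun n : ℕ =>
          ν {ω | fillupLevel α ω n = kn n ∨ fillupLevel α ω n = kn n + 1})
        atTop (nhds 1) := by
  have hq0 : 0 < q := by linarith
  set L := log (1 / √(p * q))
  set b := log (p / q) / 2
  have hbL : |b| < L := abs_log_div_lt hp hp1 hq0 (by linarith)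
  have hL0 : 0 < L := (abs_nonneg b).trans_lt hbL
  have hcenter (n : ℕ) : logb (1 / √(p * q)) n -
      |log (p / q)| / (2 * L ^ ((3 : ℝ) / 2)) * xα * √(log n) = center L |b| xα (log n) := by
    rw [center, abs_div, abs_two, div_div]
    rfl
  obtain ⟨C, -, c, hc, hev⟩ :=
    exists_fillMean_two_step_crossing hL0 (abs_nonneg b) hbL hα hα1 hxα
  obtain ⟨kn, hkn⟩ := hev.choice
  have hknear : ∀ᶠ n : ℕ in atTop, |kn n - center L |b| xα (log n)| ≤ C := hkn.mono fun n h => h.1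
  obtain ⟨C', hC'⟩ := (isBoundedUnder_of_eventually_le hknear).bddAbove_range
  have htop : Tendsto kn atTop atTop := by
    refine tendsto_natCast_atTop_iff.1 (tendsto_atTop_mono' _ (hknear.mono fun n h => ?_)
      (tendsto_atTop_add_const_right _ (-C) (tendsto_center hL0 |b| xα)))
    linarith [(abs_le.1 h).1]
  refine ⟨max C' 1, by positivity, kn, fun n _ => ?_, tendsto_measure_fillupLevel hν
    (eq_exp_neg_log_add hp hq0) (hq ▸ eq_exp_neg_log_sub hp hq0) hα hc htop
    (hkn.mono fun n h => h.2)⟩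
  rw [hcenter]
  exact (hC' ⟨n, rfl⟩).trans (le_max_left _ _)
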